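/- Let b ∈ ℝ, c < 0, and let m1 > 0 be real. For every integer m ≥ 2 there exist constants C > 0 and δ > 0 such that for all real q with 0 < q < δ, the (2m−1)-th gap length of the operator with potential v(x) = b·q^{m1}·cos 2x + c·q^{2m1}·cos 4x satisfies |γ_{2m−1}(q) − 32·|(b/2)·Π_{k=1}^{m−1} ((b/2)² + 8c·k²)|·q^{m1·(2m−1)} / (2^{4m}·((2m−2)!)²)| ≤ C·q^{m1·(2m+1)}. -/

import Mathlib

open Real

noncomputable section

/-- `f` is a (possibly zero) solution of `-f'' + v f = λ f` that is `π`-periodic. -/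
def IsPerEF (v : ℝ → ℝ) (lam : ℝ) (f : ℝ → ℝ) : Prop :=
  ContDiff ℝ 2 f ∧ (∀ x, -(deriv (deriv f) x) + v x * f x = lam * f x) ∧
    ∀ x, f (x + Real.pi) = f x

/-- `f` is a (possibly zero) solution of `-f'' + v f = λ f` with `f(x+π) = -f(x)`. -/
def IsSemiEF (v : ℝ → ℝ) (lam : ℝ) (f : ℝ → ℝ) : Prop :=
  ContDiff ℝ 2 f ∧ (∀ x, -(deriv (deriv f) x) + v x * f x = lam * f x) ∧
    ∀ x, f (x + Real.pi) = -f x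

/-- Multiplicity of `λ` as a periodic eigenvalue: the dimension of the space of
π-periodic solutions. -/
def perMult (v : ℝ → ℝ) (lam : ℝ) : ℕ :=
  Module.finrank ℝ (Submodule.span ℝ {f : ℝ → ℝ | IsPerEF v lam f})

/-- Multiplicity of `λ` as a semi-periodic eigenvalue. -/
def semiMult (v : ℝ → ℝ) (lam : ℝ) : ℕ :=
  Module.finrank ℝ (Submodule.span ℝ {f : ℝ → ℝ | IsSemiEF v lam f})

/-- `lamP` enumerates the periodic eigenvalues of `-D² + v` in nondecreasing order
with multiplicity (indices `0, 1, 2, …`). -/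
def EnumPer (v : ℝ → ℝ) (lamP : ℕ → ℝ) : Prop :=
  Monotone lamP ∧ (∀ n, ∃ f, f ≠ 0 ∧ IsPerEF v (lamP n) f) ∧
    ∀ lam : ℝ, Nat.card {n : ℕ // lamP n = lam} = perMult v lam

/-- `lamM` enumerates the semi-periodic eigenvalues of `-D² + v` in nondecreasing order
with multiplicity (indices `1, 2, 3, …`). -/
def EnumSemi (v : ℝ → ℝ) (lamM : ℕ → ℝ) : Prop :=
  MonotoneOn lamM {n : ℕ | 1 ≤ n} ∧ (∀ n, 1 ≤ n → ∃ f, f ≠ 0 ∧ IsSemiEF v (lamM n) f) ∧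
    ∀ lam : ℝ, Nat.card {n : ℕ // 1 ≤ n ∧ lamM n = lam} = semiMult v lam

/-- The length of the `n`-th instability interval: `λ_{n+1}^- - λ_n^-` for odd `n`,
`λ_n^+ - λ_{n-1}^+` for even `n`. -/
def gapLen (lamP lamM : ℕ → ℝ) (n : ℕ) : ℝ :=
  if Odd n then lamM (n + 1) - lamM n else lamP n - lamP (n - 1)

def dd (k : ℕ) : ℝ := (2 * (k : ℝ) + 1) ^ 2

def uu (B a Q : ℝ) (k : ℕ) : ℝ := Q * (B + 4 * a * ((k : ℝ) + 1))

def ll (B a Q : ℝ) (k : ℕ) : ℝ := Q * (B - 4 * a * (k : ℝ))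

/-- the previous entry of a sequence, with the reflecting boundary condition at `0`. -/
def prv (σ : ℝ) (A : ℕ → ℝ) : ℕ → ℝ
  | 0 => σ * A 0
  | k + 1 => A k

def Eqn (B a Q σ μ : ℝ) (A : ℕ → ℝ) (k : ℕ) : Prop :=
  (dd k - μ) * A k = uu B a Q k * A (k + 1) + ll B a Q k * prv σ A k

def KK (B a : ℝ) : ℝ := 2 * |B| + 8 * |a|

lemma KK_nonneg (B a : ℝ) : 0 ≤ KK B a := by unfold KK; positivity

def Bdd (A : ℕ → ℝ) : Prop := ∃ M, ∀ k, |A k| ≤ M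

lemma apriori {A : ℕ → ℝ} {c : ℝ} (hb : Bdd A)
    (h : ∀ M, (∀ k, |A k| ≤ M) → ∀ k, |A k| ≤ c + M / 2) : ∀ k, |A k| ≤ 2 * c := by
  obtain ⟨M, hM⟩ := hb
  have hbd : BddAbove (Set.range fun k => |A k|) := ⟨M, by rintro _ ⟨k, rfl⟩; exact hM k⟩
  have h1 : ∀ k, |A k| ≤ ⨆ k, |A k| := fun k => le_ciSup hbd k
  have h2 := h _ h1
  have h3 : (⨆ k, |A k|) ≤ c + (⨆ k, |A k|) / 2 := ciSup_le h2
  intro k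
  have := h1 k
  linarith

lemma prv_bound {σ M : ℝ} {A : ℕ → ℝ} (hσ : |σ| ≤ 1) (hM : ∀ k, |A k| ≤ M) (k : ℕ) :
    |prv σ A k| ≤ M := by
  cases k with
  | zero =>
    simp only [prv, abs_mul]
    have := hM 0
    nlinarith [abs_nonneg σ, abs_nonneg (A 0)]
  | succ k => exact hM k

lemma comb_bound {B a Q x y M : ℝ} (hQ : 0 ≤ Q) (k : ℕ) (hx : |x| ≤ M) (hy : |y| ≤ M) :
    |uu B a Q k * x + ll B a Q k * y| ≤ KK B a * Q * (k + 1) * M := by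
  have hM : 0 ≤ M := (abs_nonneg _).trans hx
  have hk : (0 : ℝ) ≤ k := Nat.cast_nonneg k
  have hu : |uu B a Q k| ≤ Q * (|B| + 4 * |a| * (k + 1)) := by
    unfold uu
    rw [abs_mul, abs_of_nonneg hQ]
    gcongr
    refine (abs_add_le _ _).trans ?_
    rw [abs_mul, abs_mul, abs_of_nonneg (by positivity : (0 : ℝ) ≤ (k : ℝ) + 1)]
    norm_num
  have hl : |ll B a Q k| ≤ Q * (|B| + 4 * |a| * (k + 1)) := by
    unfold ll
    rw [abs_mul, abs_of_nonneg hQ]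
    gcongr
    refine (abs_sub _ _).trans ?_
    rw [abs_mul, abs_mul, abs_of_nonneg hk]
    norm_num
    nlinarith [abs_nonneg a]
  calc _ ≤ |uu B a Q k| * |x| + |ll B a Q k| * |y| := by
        rw [← abs_mul, ← abs_mul]; exact abs_add_le _ _
    _ ≤ Q * (|B| + 4 * |a| * (k + 1)) * M + Q * (|B| + 4 * |a| * (k + 1)) * M := by gcongr
    _ ≤ _ := by
        unfold KK
        have : 0 ≤ Q * M * (|B| * k) := by positivity
        nlinarith

lemma dd_gap {j k : ℕ} {μ : ℝ} (hμ : |μ - dd j| ≤ 1) (hk : k ≠ j) :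
    (k : ℝ) + 1 ≤ |dd k - μ| := by
  obtain ⟨h1, h2⟩ := abs_le.1 hμ
  have hk0 : (0 : ℝ) ≤ k := Nat.cast_nonneg k
  have hj0 : (0 : ℝ) ≤ j := Nat.cast_nonneg j
  unfold dd at *
  rcases lt_or_gt_of_ne hk with h | h
  · have : (k : ℝ) + 1 ≤ j := by exact_mod_cast h
    rw [abs_of_nonpos (by nlinarith)]
    nlinarith
  · have : (j : ℝ) + 1 ≤ k := by exact_mod_cast h
    rw [abs_of_nonneg (by nlinarith)]
    nlinarith

lemma div_bound {x y c M : ℝ} (hc : 0 < c) (hx : c ≤ |x|) (h : |x * y| ≤ c * M) : |y| ≤ M := by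
  rw [abs_mul] at h
  have h2 : c * |y| ≤ c * M := (mul_le_mul_of_nonneg_right hx (abs_nonneg y)).trans h
  exact le_of_mul_le_mul_left h2 hc

structure IsLS (B a Q σ : ℝ) (j : ℕ) (μ : ℝ) (A : ℕ → ℝ) : Prop where
  bdd : Bdd A
  one : A j = 1
  eqn : ∀ k, k ≠ j → Eqn B a Q σ μ A k

lemma ls_step {B a Q σ μ M r : ℝ} {j k : ℕ} {A : ℕ → ℝ} (hQ : 0 ≤ Q) (hσ : |σ| ≤ 1)
    (hμ : |μ - dd j| ≤ 1) (hk : k ≠ j) (hr : 0 ≤ r)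
    (h : |(dd k - μ) * A k - (uu B a Q k * A (k + 1) + ll B a Q k * prv σ A k)| ≤ r)
    (hM : ∀ k, |A k| ≤ M) : |A k| ≤ KK B a * Q * M + r := by
  have hk0 : (0 : ℝ) ≤ k := Nat.cast_nonneg k
  have h1 := comb_bound (B := B) (a := a) hQ k (hM (k+1)) (prv_bound hσ hM k)
  refine div_bound (c := (k : ℝ) + 1) (by positivity) (dd_gap hμ hk) ?_
  have h2 := abs_sub_abs_le_abs_sub ((dd k - μ) * A k)
    (uu B a Q k * A (k + 1) + ll B a Q k * prv σ A k)
  nlinarith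

lemma ls_bound {B a Q σ μ : ℝ} {j : ℕ} {A : ℕ → ℝ} (hQ : 0 ≤ Q) (hσ : |σ| ≤ 1)
    (hK : KK B a * Q ≤ 1 / 2) (hμ : |μ - dd j| ≤ 1) (hA : IsLS B a Q σ j μ A) :
    (∀ k, |A k| ≤ 2) ∧ ∀ k, k ≠ j → |A k| ≤ 2 * (KK B a * Q) := by
  have h1 : ∀ M, (∀ k, |A k| ≤ M) → ∀ k, k ≠ j → |A k| ≤ KK B a * Q * M := by
    intro M hM k hk
    have := ls_step (B := B) (a := a) (σ := σ) (r := 0) hQ hσ hμ hk le_rfl (by rw [hA.eqn k hk]; simp) hM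
    linarith
  have h2 : ∀ k, |A k| ≤ 2 * 1 := by
    refine apriori hA.bdd ?_
    intro M hM k
    have hM0 : 0 ≤ M := (abs_nonneg _).trans (hM 0)
    by_cases hk : k = j
    · subst hk; rw [hA.one]; simp; linarith
    · have := h1 M hM k hk
      nlinarith
  refine ⟨by simpa using h2, fun k hk => ?_⟩
  have := h1 _ h2 k hk
  linarith

lemma ls_zero {B a Q σ μ : ℝ} {j : ℕ} {A : ℕ → ℝ} (hQ : 0 ≤ Q) (hσ : |σ| ≤ 1)
    (hK : KK B a * Q ≤ 1 / 2) (hμ : |μ - dd j| ≤ 1) (hb : Bdd A) (h0 : A j = 0)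
    (hA : ∀ k, k ≠ j → Eqn B a Q σ μ A k) : ∀ k, A k = 0 := by
  have h2 : ∀ k, |A k| ≤ 2 * 0 := by
    refine apriori hb ?_
    intro M hM k
    have hM0 : 0 ≤ M := (abs_nonneg _).trans (hM 0)
    by_cases hk : k = j
    · subst hk; rw [h0]; simp; linarith
    · have := ls_step (B := B) (a := a) (σ := σ) (r := 0) hQ hσ hμ hk le_rfl (by rw [hA k hk]; simp) hM
      nlinarith
  intro k
  have := h2 k
  simpa using this

lemma prv_sub (σ : ℝ) (A A' : ℕ → ℝ) (k : ℕ) :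
    prv σ (fun i => A i - A' i) k = prv σ A k - prv σ A' k := by
  cases k <;> simp [prv]; ring

lemma bdd_sub {A A' : ℕ → ℝ} (h : Bdd A) (h' : Bdd A') : Bdd (fun i => A i - A' i) := by
  obtain ⟨M, hM⟩ := h
  obtain ⟨M', hM'⟩ := h'
  exact ⟨M + M', fun k => (abs_sub _ _).trans (add_le_add (hM k) (hM' k))⟩

lemma ls_lip {B a Q σ μ μ' : ℝ} {j : ℕ} {A A' : ℕ → ℝ} (hQ : 0 ≤ Q) (hσ : |σ| ≤ 1)
    (hK : KK B a * Q ≤ 1 / 2) (hμ : |μ - dd j| ≤ 1) (hμ' : |μ' - dd j| ≤ 1)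
    (hA : IsLS B a Q σ j μ A) (hA' : IsLS B a Q σ j μ' A') :
    ∀ k, |A k - A' k| ≤ 4 * (KK B a * Q) * |μ - μ'| := by
  have hKn := KK_nonneg B a
  have hb' := (ls_bound hQ hσ hK hμ' hA').2
  have key : ∀ k, |(fun i => A i - A' i) k| ≤ 2 * (2 * (KK B a * Q) * |μ - μ'|) := by
    refine apriori (bdd_sub hA.bdd hA'.bdd) ?_
    intro M hM k
    have hM0 : 0 ≤ M := (abs_nonneg _).trans (hM 0)
    by_cases hk : k = j
    · subst hk; simp only [hA.one, hA'.one, sub_self, abs_zero]; positivity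
    · have h1 := hA.eqn k hk
      have h2 := hA'.eqn k hk
      unfold Eqn at h1 h2
      have := ls_step (B := B) (a := a) (σ := σ) (r := 2 * (KK B a * Q) * |μ - μ'|) hQ hσ hμ hk
        (by positivity) (by
          have : (dd k - μ) * (fun i => A i - A' i) k - (uu B a Q k * (fun i => A i - A' i) (k + 1)
            + ll B a Q k * prv σ (fun i => A i - A' i) k) = A' k * (μ - μ') := by
              rw [prv_sub]; simp only; linear_combination h1 - h2
          rw [this, abs_mul]
          gcongr
          exact hb' k hk) hM
      nlinarith
  intro k
  have := key k
  simp only at this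
  linarith

/-- the operator of the Lyapunov–Schmidt fixed point problem -/
def lsFun (B a Q σ : ℝ) (j : ℕ) (μ : ℝ) (A : ℕ → ℝ) (k : ℕ) : ℝ :=
  if k = j then 1 else (uu B a Q k * A (k + 1) + ll B a Q k * prv σ A k) / (dd k - μ)

lemma quot_bound {B a Q μ x y M : ℝ} {j k : ℕ} (hQ : 0 ≤ Q) (hμ : |μ - dd j| ≤ 1) (hk : k ≠ j)
    (hx : |x| ≤ M) (hy : |y| ≤ M) :
    |(uu B a Q k * x + ll B a Q k * y) / (dd k - μ)| ≤ KK B a * Q * M := by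
  have hk0 : (0 : ℝ) ≤ k := Nat.cast_nonneg k
  have hg := dd_gap hμ hk
  have hpos : 0 < |dd k - μ| := by linarith
  have hM : 0 ≤ M := (abs_nonneg _).trans hx
  have hKn := KK_nonneg B a
  rw [abs_div, div_le_iff₀ hpos]
  refine (comb_bound hQ k hx hy).trans ?_
  have : 0 ≤ KK B a * Q * M := by positivity
  nlinarith

lemma ls_exists {B a Q σ μ : ℝ} {j : ℕ} (hQ : 0 ≤ Q) (hσ : |σ| ≤ 1)
    (hK : KK B a * Q ≤ 1 / 2) (hμ : |μ - dd j| ≤ 1) : ∃ A, IsLS B a Q σ j μ A := by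
  have hKn := KK_nonneg B a
  have hbd : ∀ (A : BoundedContinuousFunction ℕ ℝ) (k : ℕ),
      ‖lsFun B a Q σ j μ A k‖ ≤ 1 + ‖A‖ := by
    intro A k
    rw [Real.norm_eq_abs]
    unfold lsFun
    split_ifs with h
    · simp
    · have hA : ∀ k, |A k| ≤ ‖A‖ := fun k => A.norm_coe_le_norm k
      refine (quot_bound hQ hμ h (hA _) (prv_bound hσ hA k)).trans ?_
      nlinarith [norm_nonneg A]
  let T : BoundedContinuousFunction ℕ ℝ → BoundedContinuousFunction ℕ ℝ := fun A =>
    BoundedContinuousFunction.ofNormedAddCommGroupDiscrete (lsFun B a Q σ j μ A) (1 + ‖A‖) (hbd A)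
  have hT : ∀ A k, T A k = lsFun B a Q σ j μ A k := fun A k => rfl
  have hc : ContractingWith (1 / 2 : NNReal) T := by
    refine ⟨by norm_num [← NNReal.coe_lt_coe], LipschitzWith.of_dist_le_mul fun A A' => ?_⟩
    rw [BoundedContinuousFunction.dist_le (by positivity)]
    intro k
    rw [hT, hT, Real.dist_eq]
    unfold lsFun
    split_ifs with h
    · simp
    · have hA : ∀ k, |(fun i => A i - A' i) k| ≤ dist A A' := fun k => by
        have := BoundedContinuousFunction.dist_coe_le_dist (f := A) (g := A') k
        rwa [Real.dist_eq] at this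
      have := quot_bound (B := B) (a := a) hQ hμ h (hA (k+1)) (prv_bound hσ hA k)
      rw [prv_sub] at this
      have e : (uu B a Q k * A (k + 1) + ll B a Q k * prv σ A k) / (dd k - μ) -
        (uu B a Q k * A' (k + 1) + ll B a Q k * prv σ A' k) / (dd k - μ) =
        (uu B a Q k * (A (k + 1) - A' (k+1)) + ll B a Q k * (prv σ A k - prv σ A' k)) / (dd k - μ) := by
          ring
      rw [e]
      refine this.trans ?_
      push_cast
      have := dist_nonneg (x := A) (y := A')
      nlinarith
  refine ⟨(hc.fixedPoint T : BoundedContinuousFunction ℕ ℝ), ⟨_, fun k => (hc.fixedPoint T).norm_coe_le_norm k⟩, ?_, ?_⟩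
  · have := hT (hc.fixedPoint T) j
    rw [hc.fixedPoint_isFixedPt.eq] at this
    rw [this]; simp [lsFun]
  · intro k hk
    have := hT (hc.fixedPoint T) k
    rw [hc.fixedPoint_isFixedPt.eq] at this
    have hk0 : (0 : ℝ) ≤ k := Nat.cast_nonneg k
    have hg := dd_gap hμ hk
    have hne : dd k - μ ≠ 0 := by
      intro h; rw [h] at hg; simp at hg; linarith
    unfold Eqn
    simp only [lsFun, if_neg hk] at this
    rw [eq_div_iff hne] at this
    linarith

def hfun (B a Q σ : ℝ) (j : ℕ) (A : ℕ → ℝ) : ℝ := uu B a Q j * A (j + 1) + ll B a Q j * prv σ A j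

lemma hfun_bound {B a Q σ μ : ℝ} {j : ℕ} {A : ℕ → ℝ} (hQ : 0 ≤ Q) (hσ : |σ| ≤ 1)
    (hK : KK B a * Q ≤ 1 / 2) (hμ : |μ - dd j| ≤ 1) (hA : IsLS B a Q σ j μ A) :
    |hfun B a Q σ j A| ≤ 2 * (KK B a * Q * (j + 1)) := by
  have h1 := (ls_bound hQ hσ hK hμ hA).1
  have := comb_bound (B := B) (a := a) hQ j (h1 (j+1)) (prv_bound hσ h1 j)
  unfold hfun
  linarith

lemma hfun_bound2 {B a Q σ μ : ℝ} {j : ℕ} {A : ℕ → ℝ} (hQ : 0 ≤ Q) (hσ : |σ| ≤ 1)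
    (hK : KK B a * Q ≤ 1 / 2) (hμ : |μ - dd j| ≤ 1) (hA : IsLS B a Q σ j μ A) (hj : 1 ≤ j) :
    |hfun B a Q σ j A| ≤ 2 * (KK B a) ^ 2 * (j + 1) * Q ^ 2 := by
  have h1 := (ls_bound hQ hσ hK hμ hA).2
  obtain ⟨i, rfl⟩ : ∃ i, j = i + 1 := ⟨j - 1, by omega⟩
  have := comb_bound (B := B) (a := a) hQ (i+1) (h1 (i+1+1) (by omega)) (h1 i (by omega))
  unfold hfun
  simp only [prv]
  refine this.trans (le_of_eq ?_)
  ring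

lemma hfun_lip {B a Q σ μ μ' : ℝ} {j : ℕ} {A A' : ℕ → ℝ} (hQ : 0 ≤ Q) (hσ : |σ| ≤ 1)
    (hK : KK B a * Q ≤ 1 / 2) (hμ : |μ - dd j| ≤ 1) (hμ' : |μ' - dd j| ≤ 1)
    (hA : IsLS B a Q σ j μ A) (hA' : IsLS B a Q σ j μ' A') :
    |hfun B a Q σ j A - hfun B a Q σ j A'| ≤ 4 * (KK B a) ^ 2 * (j + 1) * Q ^ 2 * |μ - μ'| := by
  have h1 : ∀ k, |(fun i => A i - A' i) k| ≤ _ := ls_lip hQ hσ hK hμ hμ' hA hA'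
  have := comb_bound (B := B) (a := a) hQ j (h1 (j+1)) (prv_bound hσ h1 j)
  rw [prv_sub] at this
  have e : hfun B a Q σ j A - hfun B a Q σ j A' = uu B a Q j * (fun i ↦ A i - A' i) (j + 1) +
    ll B a Q j * (prv σ A j - prv σ A' j) := by unfold hfun; ring
  rw [e]
  refine this.trans (le_of_eq ?_)
  ring

/-- smallness: `8 K Q (j+1) ≤ 1`. -/
lemma small_aux {B a Q : ℝ} {j : ℕ} (hQ : 0 ≤ Q) (hS : 8 * (KK B a * Q * (j + 1)) ≤ 1) :
    KK B a * Q ≤ 1 / 2 ∧ 4 * (KK B a) ^ 2 * (j + 1) * Q ^ 2 ≤ 1 / 2 ∧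
      2 * (KK B a * Q * (j + 1)) ≤ 1 / 2 := by
  have hKn := KK_nonneg B a
  have hj : (0 : ℝ) ≤ j := Nat.cast_nonneg j
  have h0 : 0 ≤ KK B a * Q := by positivity
  have h1 : KK B a * Q ≤ 1 / 8 := by nlinarith
  refine ⟨by linarith, ?_, by linarith⟩
  have : 4 * (KK B a) ^ 2 * (j + 1) * Q ^ 2 = 4 * (KK B a * Q) * (KK B a * Q * (j + 1)) := by ring
  rw [this]
  nlinarith

/-- eigenpair: all equations hold. -/
lemma eig_exists {B a Q σ : ℝ} {j : ℕ} (hQ : 0 ≤ Q) (hσ : |σ| ≤ 1)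
    (hS : 8 * (KK B a * Q * (j + 1)) ≤ 1) :
    ∃ μ A, |μ - dd j| ≤ 1 ∧ IsLS B a Q σ j μ A ∧ ∀ k, Eqn B a Q σ μ A k := by
  obtain ⟨hK, hL, hB⟩ := small_aux hQ hS
  have hex : ∀ μ : ℝ, ∃ A, |μ - dd j| ≤ 1 → IsLS B a Q σ j μ A := by
    intro μ
    by_cases h : |μ - dd j| ≤ 1
    · obtain ⟨A, hA⟩ := ls_exists (B := B) (a := a) hQ hσ hK h
      exact ⟨A, fun _ => hA⟩
    · exact ⟨0, fun h' => absurd h' h⟩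
  choose A hA using hex
  have hmem : ∀ μ ∈ Set.Icc (dd j - 1) (dd j + 1), |μ - dd j| ≤ 1 := by
    rintro μ ⟨h1, h2⟩
    rw [abs_le]; constructor <;> linarith
  have hcont : ContinuousOn (fun μ => hfun B a Q σ j (A μ)) (Set.Icc (dd j - 1) (dd j + 1)) := by
    have : LipschitzOnWith 1 (fun μ => hfun B a Q σ j (A μ)) (Set.Icc (dd j - 1) (dd j + 1)) := by
      refine LipschitzOnWith.of_dist_le_mul fun x hx y hy => ?_
      rw [Real.dist_eq, Real.dist_eq]
      have := hfun_lip hQ hσ hK (hmem x hx) (hmem y hy) (hA x (hmem x hx)) (hA y (hmem y hy))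
      refine this.trans ?_
      push_cast
      nlinarith [abs_nonneg (x - y)]
    exact this.continuousOn
  have hG : ContinuousOn (fun μ => μ + hfun B a Q σ j (A μ)) (Set.Icc (dd j - 1) (dd j + 1)) :=
    continuousOn_id.add hcont
  have hle : dd j - 1 ≤ dd j + 1 := by linarith
  have hiv := intermediate_value_Icc hle hG
  have e1 := abs_le.1 (hfun_bound hQ hσ hK (hmem _ (Set.left_mem_Icc.2 hle)) (hA _ (hmem _ (Set.left_mem_Icc.2 hle))))
  have e2 := abs_le.1 (hfun_bound hQ hσ hK (hmem _ (Set.right_mem_Icc.2 hle)) (hA _ (hmem _ (Set.right_mem_Icc.2 hle))))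
  obtain ⟨μ, hμ, hμe⟩ := hiv (show dd j ∈ Set.Icc _ _ from ⟨by linarith [e1.2], by linarith [e2.1]⟩)
  have hLS := hA μ (hmem μ hμ)
  refine ⟨μ, A μ, hmem μ hμ, hLS, fun k => ?_⟩
  by_cases hk : k = j
  · subst hk
    unfold Eqn
    rw [hLS.one]
    simp only [hfun] at hμe
    linarith
  · exact hLS.eqn k hk

lemma eig_unique {B a Q σ μ μ' : ℝ} {j : ℕ} {A A' : ℕ → ℝ} (hQ : 0 ≤ Q) (hσ : |σ| ≤ 1)
    (hS : 8 * (KK B a * Q * (j + 1)) ≤ 1) (hμ : |μ - dd j| ≤ 1) (hμ' : |μ' - dd j| ≤ 1)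
    (hA : IsLS B a Q σ j μ A) (hA' : IsLS B a Q σ j μ' A')
    (h : Eqn B a Q σ μ A j) (h' : Eqn B a Q σ μ' A' j) : μ = μ' := by
  obtain ⟨hK, hL, hB⟩ := small_aux hQ hS
  have := hfun_lip hQ hσ hK hμ hμ' hA hA'
  unfold Eqn at h h'
  rw [hA.one] at h
  rw [hA'.one] at h'
  have e : hfun B a Q σ j A - hfun B a Q σ j A' = -(μ - μ') := by
    unfold hfun; linarith
  rw [e, abs_neg] at this
  have h3 : |μ - μ'| ≤ 0 := by nlinarith [abs_nonneg (μ - μ')]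
  have := abs_nonpos_iff.1 h3
  linarith

/-- A bounded solution near `dd j` is a multiple of the eigen-sequence. -/
lemma sol_near {B a Q σ μ μ' : ℝ} {j : ℕ} {A A' : ℕ → ℝ} (hQ : 0 ≤ Q) (hσ : |σ| ≤ 1)
    (hS : 8 * (KK B a * Q * (j + 1)) ≤ 1) (hμ : |μ - dd j| ≤ 1) (hμ' : |μ' - dd j| ≤ 1)
    (hA : IsLS B a Q σ j μ A) (h : Eqn B a Q σ μ A j)
    (hb : Bdd A') (hA' : ∀ k, Eqn B a Q σ μ' A' k) :
    (A' j = 0 → ∀ k, A' k = 0) ∧ (μ' ≠ μ → A' j = 0) := by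
  obtain ⟨hK, hL, hB⟩ := small_aux hQ hS
  refine ⟨fun h0 => ls_zero hQ hσ hK hμ' hb h0 (fun k _ => hA' k), fun hne => ?_⟩
  by_contra h0
  apply hne
  have hE : ∀ k, Eqn B a Q σ μ' (fun i => A' i / A' j) k := by
    intro k
    have := hA' k
    unfold Eqn at *
    have e : prv σ (fun i => A' i / A' j) k = prv σ A' k / A' j := by
      cases k <;> simp [prv]; ring
    rw [e]
    field_simp
    linarith
  refine (eig_unique hQ hσ hS hμ hμ' hA ⟨?_, ?_, fun k _ => hE k⟩ h (hE j)).symm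
  · obtain ⟨M, hM⟩ := hb
    refine ⟨M / |A' j|, fun k => ?_⟩
    rw [abs_div]
    gcongr
    exact hM k
  · simp [h0]

/-- no bounded solution away from the `dd k`. -/
lemma sol_away {B a Q σ μ : ℝ} {m : ℕ} {A : ℕ → ℝ} (hQ : 0 ≤ Q) (hσ : |σ| ≤ 1)
    (hS : 8 * (KK B a * Q * (m + 2)) ≤ 1) (hcut : μ ≤ dd m) (hμ : ∀ k ≤ m + 1, 1 < |μ - dd k|)
    (hb : Bdd A) (hA : ∀ k, Eqn B a Q σ μ A k) : ∀ k, A k = 0 := by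
  have hKn := KK_nonneg B a
  have hm0 : (0 : ℝ) ≤ m := Nat.cast_nonneg m
  have hgap : ∀ k : ℕ, ((k : ℝ) + 1) / (m + 2) ≤ |dd k - μ| := by
    intro k
    have hk0 : (0 : ℝ) ≤ k := Nat.cast_nonneg k
    rw [div_le_iff₀ (by positivity)]
    by_cases hk : k ≤ m + 1
    · have h1 := hμ k hk
      rw [abs_sub_comm] at h1
      have : (k : ℝ) ≤ m + 1 := by exact_mod_cast hk
      nlinarith
    · have h1 : (m : ℝ) + 2 ≤ k := by exact_mod_cast (by omega : m + 2 ≤ k)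
      have h2 : (k : ℝ) + 1 ≤ dd k - μ := by
        unfold dd at *
        nlinarith
      have h3 := le_abs_self (dd k - μ)
      nlinarith
  have h2 : ∀ k, |A k| ≤ 2 * 0 := by
    refine apriori hb ?_
    intro M hM k
    have hk0 : (0 : ℝ) ≤ k := Nat.cast_nonneg k
    have hM0 : 0 ≤ M := (abs_nonneg _).trans (hM 0)
    refine div_bound (by positivity) (hgap k) ?_
    rw [hA k]
    refine (comb_bound hQ k (hM _) (prv_bound hσ hM k)).trans ?_
    have : ((k : ℝ) + 1) / (m + 2) * (0 + M / 2) = ((k + 1) * M) * (1 / 2 / (m + 2)) := by ring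
    rw [this]
    have h3 : KK B a * Q ≤ 1 / 2 / (m + 2) := by
      rw [le_div_iff₀ (by positivity)]
      have : 0 ≤ KK B a * Q * (m + 2) := by positivity
      linarith
    calc KK B a * Q * (k + 1) * M = ((k + 1) * M) * (KK B a * Q) := by ring
      _ ≤ _ := by gcongr
  intro k
  have := h2 k
  simpa using this

lemma dd_gap2 {j k : ℕ} {μ : ℝ} (hμ : |μ - dd j| ≤ 1) (hk : k ≠ j) :
    ((k : ℝ) + 1) ^ 2 ≤ (j + 2) * |dd k - μ| := by
  have hk0 : (0 : ℝ) ≤ k := Nat.cast_nonneg k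
  have hj0 : (0 : ℝ) ≤ j := Nat.cast_nonneg j
  rcases lt_or_gt_of_ne hk with h | h
  · have h1 := dd_gap hμ hk
    have : (k : ℝ) + 1 ≤ j := by exact_mod_cast h
    nlinarith
  · obtain ⟨h1, h2⟩ := abs_le.1 hμ
    have h3 := le_abs_self (dd k - μ)
    obtain ⟨i, rfl⟩ : ∃ i, k = j + 1 + i := ⟨k - j - 1, by omega⟩
    have hi0 : (0 : ℝ) ≤ i := Nat.cast_nonneg i
    unfold dd at *
    push_cast at *
    have : ((j : ℝ) + 1 + i + 1) ^ 2 ≤ (j + 2) * ((2 * ((j : ℝ) + 1 + i) + 1) ^ 2 - μ) := by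
      have h4 : (2 * ((j : ℝ) + 1 + i) + 1) ^ 2 - μ ≥ (i + 1) * (j + i + 2) := by nlinarith [mul_nonneg hi0 hj0]
      have h5 : (j + 2 : ℝ) * ((i + 1) * (j + i + 2)) ≥ ((j : ℝ) + 1 + i + 1) ^ 2 := by
        have : (j + 2 : ℝ) * (i + 1) ≥ j + i + 2 := by nlinarith [mul_nonneg hi0 hj0]
        nlinarith
      nlinarith
    nlinarith

lemma decay {B a Q σ μ : ℝ} {j : ℕ} {A : ℕ → ℝ} (hQ : 0 ≤ Q) (hσ : |σ| ≤ 1)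
    (hμ : |μ - dd j| ≤ 1) (hb : Bdd A)
    (hA : ∀ k, Eqn B a Q σ μ A k) (p : ℕ) : ∃ C, ∀ k : ℕ, |A k| * ((k : ℝ) + 1) ^ p ≤ C := by
  induction p with
  | zero => obtain ⟨M, hM⟩ := hb; exact ⟨M, by simpa using hM⟩
  | succ p ih =>
    obtain ⟨C, hC⟩ := ih
    have hKn := KK_nonneg B a
    have hC0 : 0 ≤ C := le_trans (by positivity) (hC 0)
    have hj0 : (0 : ℝ) ≤ j := Nat.cast_nonneg j
    have hprv : ∀ k : ℕ, |prv σ A k| * ((k : ℝ) + 1) ^ p ≤ C * 2 ^ p := by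
      intro k
      cases k with
      | zero =>
        have h1 := hC 0
        simp only [prv, abs_mul]
        norm_num at *
        have h2 : (1 : ℝ) ≤ 2 ^ p := one_le_pow₀ (by norm_num)
        nlinarith [abs_nonneg (A 0), abs_nonneg σ]
      | succ k =>
        have hk0 : (0 : ℝ) ≤ k := Nat.cast_nonneg k
        simp only [prv]
        calc |A k| * (((k + 1 : ℕ) : ℝ) + 1) ^ p ≤ |A k| * ((k + 1) * 2) ^ p := by
              gcongr; push_cast; linarith
          _ = |A k| * (k + 1) ^ p * 2 ^ p := by rw [mul_pow]; ring
          _ ≤ _ := by gcongr; exact hC k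
    have hnext : ∀ k : ℕ, |A (k + 1)| * ((k : ℝ) + 1) ^ p ≤ C * 2 ^ p := by
      intro k
      have h2 : (1 : ℝ) ≤ 2 ^ p := one_le_pow₀ (by norm_num)
      calc |A (k + 1)| * ((k : ℝ) + 1) ^ p ≤ |A (k+1)| * (((k + 1 : ℕ) : ℝ) + 1) ^ p := by
              gcongr; push_cast; linarith
        _ ≤ C := hC (k+1)
        _ ≤ C * 2 ^ p := by nlinarith
    refine ⟨(j + 2) * (KK B a * Q * (C * 2 ^ p)) + |A j| * ((j : ℝ) + 1) ^ (p + 1), fun k => ?_⟩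
    have hk0 : (0 : ℝ) ≤ k := Nat.cast_nonneg k
    by_cases hk : k = j
    · subst hk
      have : 0 ≤ ((k : ℝ) + 2) * (KK B a * Q * (C * 2 ^ p)) := by positivity
      linarith
    · have hpos : (0 : ℝ) < ((k : ℝ) + 1) ^ p := by positivity
      have hM1 : |A (k + 1)| ≤ C * 2 ^ p / ((k : ℝ) + 1) ^ p := by
        rw [le_div_iff₀ hpos]; exact hnext k
      have hM2 : |prv σ A k| ≤ C * 2 ^ p / ((k : ℝ) + 1) ^ p := by
        rw [le_div_iff₀ hpos]; exact hprv k
      have h1 := comb_bound (B := B) (a := a) hQ k hM1 hM2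
      have h2 : |dd k - μ| * |A k| ≤ KK B a * Q * (k + 1) * (C * 2 ^ p / ((k : ℝ) + 1) ^ p) := by
        rw [← abs_mul, hA k]; exact h1
      have h3 := dd_gap2 hμ hk
      have h4 : ((k : ℝ) + 1) ^ 2 * |A k| ≤
          (j + 2) * (KK B a * Q * (k + 1) * (C * 2 ^ p / ((k : ℝ) + 1) ^ p)) := by
        calc ((k : ℝ) + 1) ^ 2 * |A k| ≤ (j + 2) * |dd k - μ| * |A k| := by gcongr
          _ = (j + 2) * (|dd k - μ| * |A k|) := by ring
          _ ≤ _ := by gcongr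
      have h5 : |A k| * ((k : ℝ) + 1) ^ (p + 1) ≤ (j + 2) * (KK B a * Q * (C * 2 ^ p)) := by
        have e1 : |A k| * ((k : ℝ) + 1) ^ (p + 1) =
          (((k : ℝ) + 1) ^ 2 * |A k|) * (((k : ℝ) + 1) ^ p / (k + 1)) := by
            field_simp
            ring
        have e2 : (j + 2 : ℝ) * (KK B a * Q * (C * 2 ^ p)) =
          ((j + 2) * (KK B a * Q * (k + 1) * (C * 2 ^ p / ((k : ℝ) + 1) ^ p))) *
            (((k : ℝ) + 1) ^ p / (k + 1)) := by
              field_simp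
        rw [e1, e2]
        gcongr
      have : 0 ≤ |A j| * ((j : ℝ) + 1) ^ (p + 1) := by positivity
      linarith

/-! ### The left recursion -/

def pp (B a Q : ℝ) (k : ℕ) : ℝ := Q ^ 2 * (B ^ 2 - 16 * a ^ 2 * ((k : ℝ) + 1) ^ 2)

lemma pp_eq (B a Q : ℝ) (k : ℕ) : pp B a Q k = uu B a Q k * ll B a Q (k + 1) := by
  unfold pp uu ll; push_cast; ring

/-- solution of the rescaled recursion with initial values `x0, x1` -/
def rec2 (B a Q μ x0 x1 : ℝ) : ℕ → ℝ
  | 0 => x0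
  | 1 => x1
  | k + 2 => (dd (k + 1) - μ) * rec2 B a Q μ x0 x1 (k + 1) - pp B a Q k * rec2 B a Q μ x0 x1 k

def th (B a Q σ μ : ℝ) : ℕ → ℝ := rec2 B a Q μ 1 (dd 0 - μ - B * Q * σ)

lemma th_succ (B a Q σ μ : ℝ) (k : ℕ) : th B a Q σ μ (k + 2) =
    (dd (k + 1) - μ) * th B a Q σ μ (k + 1) - pp B a Q k * th B a Q σ μ k := by
  simp [th, rec2]

lemma th_lin (B a Q σ μ : ℝ) (k : ℕ) : th B a Q σ μ k =
    rec2 B a Q μ 1 (dd 0 - μ) k - B * Q * σ * rec2 B a Q μ 0 1 k := by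
  induction k using Nat.twoStepInduction with
  | zero => simp [th, rec2]
  | one => simp [th, rec2]
  | more k h1 h2 =>
    rw [th_succ, h1, h2]
    simp only [rec2]
    ring

lemma th_cas (B a Q μ : ℝ) (k : ℕ) :
    th B a Q 1 μ k * th B a Q (-1) μ (k + 1) - th B a Q (-1) μ k * th B a Q 1 μ (k + 1) =
      2 * B * Q * ∏ i ∈ Finset.range k, pp B a Q i := by
  induction k with
  | zero => simp [th, rec2]; ring
  | succ k ih =>
    rw [Finset.prod_range_succ, th_succ, th_succ]
    linear_combination (pp B a Q k) * ih

lemma th_A {B a Q σ μ : ℝ} {j : ℕ} {A : ℕ → ℝ} (hA : ∀ k, k ≠ j → Eqn B a Q σ μ A k) (k : ℕ)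
    (hk : k < j) : uu B a Q k * th B a Q σ μ k * A (k + 1) = th B a Q σ μ (k + 1) * A k := by
  induction k with
  | zero =>
    have := hA 0 (by omega)
    simp only [Eqn, prv] at this
    simp only [th, rec2]
    have h2 : ll B a Q 0 = B * Q := by simp [ll]; ring
    rw [h2] at this
    linear_combination -this
  | succ k ih =>
    have h1 := hA (k + 1) (by omega)
    have h2 := ih (by omega)
    simp only [Eqn, prv] at h1
    rw [th_succ, pp_eq]
    linear_combination (-th B a Q σ μ (k + 1)) * h1 + (ll B a Q (k+1)) * h2

lemma rec2_bound (B a d c1 : ℝ) (x1 : ℝ → ℝ) (x0 : ℝ)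
    (hx : ∃ C, ∀ Q μ, 0 < Q → Q ≤ 1 → |μ - d| ≤ c1 * Q ^ 2 → |x1 μ - x1 d| ≤ C * Q ^ 2) (k : ℕ) :
    ∃ C, 0 ≤ C ∧ ∀ Q μ, 0 < Q → Q ≤ 1 → |μ - d| ≤ c1 * Q ^ 2 →
      |rec2 B a Q μ x0 (x1 μ) k - rec2 B a 0 d x0 (x1 d) k| ≤ C * Q ^ 2 := by
  induction k using Nat.twoStepInduction with
  | zero => exact ⟨0, le_rfl, by intros; simp [rec2]⟩
  | one =>
    obtain ⟨C, hC⟩ := hx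
    refine ⟨|C|, abs_nonneg _, fun Q μ h1 h2 h3 => ?_⟩
    simp only [rec2]
    exact (hC Q μ h1 h2 h3).trans (by gcongr; exact le_abs_self C)
  | more k ih1 ih2 =>
    obtain ⟨C1, hC1, h1⟩ := ih1
    obtain ⟨C2, hC2, h2⟩ := ih2
    set r1 := rec2 B a 0 d x0 (x1 d) k with hr1
    set r2 := rec2 B a 0 d x0 (x1 d) (k + 1) with hr2
    set e := B ^ 2 - 16 * a ^ 2 * ((k : ℝ) + 1) ^ 2 with he
    refine ⟨(|dd (k+1) - d| + |c1|) * C2 + |c1| * |r2| + |e| * (|r1| + C1), by positivity,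
      fun Q μ hQ0 hQ1 hμ => ?_⟩
    have g1 := h1 Q μ hQ0 hQ1 hμ
    have g2 := h2 Q μ hQ0 hQ1 hμ
    set s1 := rec2 B a Q μ x0 (x1 μ) k with hs1
    set s2 := rec2 B a Q μ x0 (x1 μ) (k + 1) with hs2
    have e1 : rec2 B a Q μ x0 (x1 μ) (k + 2) - rec2 B a 0 d x0 (x1 d) (k + 2) =
      (dd (k + 1) - μ) * (s2 - r2) - (μ - d) * r2 - Q ^ 2 * (e * s1) := by
        simp only [rec2, pp]
        rw [← hs1, ← hs2, ← hr1, ← hr2, ← he]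
        ring
    have hQ2 : Q ^ 2 ≤ 1 := by nlinarith
    have hμ' : |μ - d| ≤ |c1| * Q ^ 2 := hμ.trans (by gcongr; exact le_abs_self c1)
    have f1 : |dd (k + 1) - μ| ≤ |dd (k + 1) - d| + |c1| := by
      have : dd (k + 1) - μ = (dd (k+1) - d) - (μ - d) := by ring
      rw [this]
      refine (abs_sub _ _).trans ?_
      have : |c1| * Q ^ 2 ≤ |c1| := by nlinarith [abs_nonneg c1]
      linarith
    have f2 : |s1| ≤ |r1| + C1 := by
      have : s1 = r1 + (s1 - r1) := by ring
      rw [this]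
      refine (abs_add_le _ _).trans ?_
      have : C1 * Q ^ 2 ≤ C1 := by nlinarith
      linarith
    rw [e1]
    calc _ ≤ |(dd (k + 1) - μ) * (s2 - r2)| + |(μ - d) * r2| + |Q ^ 2 * (e * s1)| := by
          refine (abs_sub _ _).trans ?_
          gcongr
          exact abs_sub _ _
      _ = |dd (k + 1) - μ| * |s2 - r2| + |μ - d| * |r2| + Q ^ 2 * (|e| * |s1|) := by
          rw [abs_mul, abs_mul, abs_mul, abs_mul, abs_of_nonneg (by positivity : 0 ≤ Q ^ 2)]
      _ ≤ (|dd (k + 1) - d| + |c1|) * (C2 * Q ^ 2) + (|c1| * Q ^ 2) * |r2|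
          + Q ^ 2 * (|e| * (|r1| + C1)) := by gcongr
      _ = _ := by ring

lemma rec2_main (B a d : ℝ) (k : ℕ) :
    rec2 B a 0 d 1 (dd 0 - d) k = ∏ i ∈ Finset.range k, (dd i - d) := by
  induction k using Nat.twoStepInduction with
  | zero => simp [rec2]
  | one => simp [rec2]
  | more k h1 h2 =>
    simp only [rec2, h2, pp]
    rw [Finset.prod_range_succ _ (k+1)]
    ring

lemma th_prod (B a d c1 : ℝ) (k : ℕ) :
    ∃ C, 0 ≤ C ∧ ∀ Q μ, 0 < Q → Q ≤ 1 → |μ - d| ≤ c1 * Q ^ 2 →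
      |th B a Q 1 μ k * th B a Q (-1) μ k - (∏ i ∈ Finset.range k, (dd i - d)) ^ 2| ≤ C * Q ^ 2 := by
  obtain ⟨C1, hC1, h1⟩ := rec2_bound B a d c1 (fun μ => dd 0 - μ) 1 ⟨c1, fun Q μ _ _ h => by
    have : (dd 0 - μ) - (dd 0 - d) = -(μ - d) := by ring
    rw [this, abs_neg]; exact h⟩ k
  obtain ⟨C2, hC2, h2⟩ := rec2_bound B a d c1 (fun μ => 1) 0 ⟨0, fun Q μ _ _ h => by simp⟩ k
  set P := ∏ i ∈ Finset.range k, (dd i - d) with hP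
  set r := rec2 B a 0 d 0 1 k with hr
  refine ⟨C1 * (2 * |P| + C1) + B ^ 2 * (|r| + C2) ^ 2, by positivity, fun Q μ hQ0 hQ1 hμ => ?_⟩
  have g1 := h1 Q μ hQ0 hQ1 hμ
  have g2 := h2 Q μ hQ0 hQ1 hμ
  rw [rec2_main] at g1
  rw [th_lin, th_lin]
  set X := rec2 B a Q μ 1 (dd 0 - μ) k
  set Y := rec2 B a Q μ 0 1 k
  rw [← hP] at g1
  have hQ2 : Q ^ 2 ≤ 1 := by nlinarith
  have f2 : |Y| ≤ |r| + C2 := by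
    have : Y = r + (Y - r) := by ring
    rw [this]
    refine (abs_add_le _ _).trans ?_
    have : C2 * Q ^ 2 ≤ C2 := by nlinarith
    linarith
  have f1 : |X + P| ≤ 2 * |P| + C1 := by
    have : X + P = 2 * P + (X - P) := by ring
    rw [this]
    refine (abs_add_le _ _).trans ?_
    rw [abs_mul, abs_two]
    have : C1 * Q ^ 2 ≤ C1 := by nlinarith
    linarith
  have e : (X - B * Q * 1 * Y) * (X - B * Q * -1 * Y) - P ^ 2 =
    (X - P) * (X + P) - Q ^ 2 * (B ^ 2 * Y ^ 2) := by ring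
  rw [e]
  calc _ ≤ |X - P| * |X + P| + Q ^ 2 * (B ^ 2 * |Y| ^ 2) := by
        refine (abs_sub _ _).trans ?_
        rw [abs_mul, sq_abs, abs_of_nonneg (by positivity : 0 ≤ Q ^ 2 * (B ^ 2 * Y ^ 2))]
    _ ≤ (C1 * Q ^ 2) * (2 * |P| + C1) + Q ^ 2 * (B ^ 2 * (|r| + C2) ^ 2) := by gcongr
    _ = _ := by ring

def Pi0 (j : ℕ) : ℝ := ∏ i ∈ Finset.range j, (dd i - dd j)

def Tc (B a : ℝ) (j : ℕ) : ℝ :=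
  2 * B * (∏ i ∈ Finset.range j, (B ^ 2 - 16 * a ^ 2 * ((i : ℝ) + 1) ^ 2)) / (Pi0 j) ^ 2

lemma Pi0_ne (j : ℕ) : Pi0 j ≠ 0 := by
  unfold Pi0
  rw [Finset.prod_ne_zero_iff]
  intro i hi
  have h : i < j := Finset.mem_range.1 hi
  have : (i : ℝ) + 1 ≤ j := by exact_mod_cast h
  have hi0 : (0 : ℝ) ≤ i := Nat.cast_nonneg i
  unfold dd
  nlinarith

lemma prod_pp (B a Q : ℝ) (j : ℕ) : ∏ i ∈ Finset.range j, pp B a Q i =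
    Q ^ (2 * j) * ∏ i ∈ Finset.range j, (B ^ 2 - 16 * a ^ 2 * ((i : ℝ) + 1) ^ 2) := by
  unfold pp
  rw [Finset.prod_mul_distrib, Finset.prod_const, Finset.card_range, ← pow_mul]

/-- difference of the two LS functions at the same `μ`. -/
lemma hdiff {B a Q μ : ℝ} {j : ℕ} {A A' : ℕ → ℝ} (hQ : 0 ≤ Q)
    (hK : KK B a * Q ≤ 1 / 2) (hμ : |μ - dd (j + 1)| ≤ 1)
    (hA : IsLS B a Q 1 (j + 1) μ A) (hA' : IsLS B a Q (-1) (j + 1) μ A') :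
    th B a Q 1 μ (j + 1) * th B a Q (-1) μ (j + 1) *
      (hfun B a Q 1 (j + 1) A - hfun B a Q (-1) (j + 1) A') =
    2 * B * Q * ∏ i ∈ Finset.range (j + 1), pp B a Q i := by
  have hE : ∀ k, (fun k => if j + 1 ≤ k then A k - A' k else 0) k = 0 := by
    refine ls_zero (B := B) (a := a) (σ := 1) (μ := μ) (j := j + 1) hQ (by simp) hK hμ ?_ ?_ ?_
    · obtain ⟨M, hM⟩ := bdd_sub hA.bdd hA'.bdd
      refine ⟨M, fun k => ?_⟩
      simp only
      split_ifs
      · exact hM k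
      · simpa using (abs_nonneg _).trans (hM 0)
    · simp [hA.one, hA'.one]
    · intro k hk
      unfold Eqn
      rcases lt_or_gt_of_ne hk with h | h
      · have e1 : ¬ (j + 1 ≤ k) := by omega
        simp only [e1, if_false]
        by_cases h2 : j + 1 ≤ k + 1
        · have : k = j := by omega
          subst this
          simp only [le_refl, if_true, hA.one, hA'.one]
          cases k <;> simp [prv]
        · simp only [h2, if_false]
          cases k with
          | zero => simp [prv]
          | succ k => 
            simp only [prv]
            have : ¬ (j + 1 ≤ k) := by omega
            simp [this]
      · obtain ⟨k, rfl⟩ : ∃ i, k = i + 1 := ⟨k - 1, by omega⟩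
        have h1 := hA.eqn (k+1) hk
        have h2 := hA'.eqn (k+1) hk
        simp only [Eqn, prv] at h1 h2 ⊢
        rw [if_pos (by omega), if_pos (by omega), if_pos (by omega)]
        linear_combination h1 - h2
  have h0 := hE (j + 2)
  simp only [show j + 1 ≤ j + 2 by omega, if_true] at h0
  have t1 := th_A hA.eqn j (by omega)
  have t2 := th_A hA'.eqn j (by omega)
  rw [hA.one] at t1
  rw [hA'.one] at t2
  have hc := th_cas B a Q μ j
  rw [Finset.prod_range_succ, pp_eq]
  simp only [hfun, prv]
  rw [show A (j + 1 + 1) = A' (j + 1 + 1) by linarith]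
  linear_combination (ll B a Q (j+1) * uu B a Q j) * hc - 
    ll B a Q (j+1) * th B a Q (-1) μ (j + 1) * t1 + ll B a Q (j+1) * th B a Q 1 μ (j + 1) * t2

set_option maxHeartbeats 800000 in
theorem asym (B a : ℝ) (j : ℕ) : ∃ C > 0, ∃ Q0 > 0, ∀ Q, 0 < Q → Q < Q0 →
    ∀ μ μ' A A', |μ - dd (j+1)| ≤ 1 → |μ' - dd (j+1)| ≤ 1 →
    IsLS B a Q 1 (j+1) μ A → IsLS B a Q (-1) (j+1) μ' A' →
    Eqn B a Q 1 μ A (j+1) → Eqn B a Q (-1) μ' A' (j+1) →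
    |(|μ - μ'|) - |Tc B a (j + 1)| * Q ^ (2 * j + 3)| ≤ C * Q ^ (2 * j + 5) := by
  have hKn := KK_nonneg B a
  set K := KK B a with hKdef
  set L := 4 * K ^ 2 * ((j + 1 : ℕ) + 1 : ℝ) with hL
  have hL0 : 0 ≤ L := by positivity
  obtain ⟨C1, hC1, h1⟩ := th_prod B a (dd (j + 1)) L (j + 1)
  set P2 := (Pi0 (j + 1)) ^ 2 with hP2
  have hP2pos : 0 < P2 := by have := Pi0_ne (j + 1); positivity
  set N := 2 * B * (∏ i ∈ Finset.range (j + 1), (B ^ 2 - 16 * a ^ 2 * ((i : ℝ) + 1) ^ 2)) with hN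
  have hT : Tc B a (j + 1) = N / P2 := rfl
  set C2 := 2 * C1 * |N| / P2 ^ 2 with hC2
  have hC20 : 0 ≤ C2 := by positivity
  set C3 := C2 + L * (2 * (|N / P2| + C2)) with hC3
  have hC30 : 0 ≤ C3 := by positivity
  refine ⟨C3 + 1, by positivity, min 1 (min (P2 / (2 * (C1 + 1))) (1 / (8 * (K * ((j + 1 : ℕ) + 1)) + 1))),
    by positivity, ?_⟩
  intro Q hQ0 hQ μ μ' A A' hμ hμ' hA hA' hE hE'
  have hQ1 : Q ≤ 1 := (hQ.trans_le (min_le_left _ _)).le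
  have hQa : Q ≤ P2 / (2 * (C1 + 1)) := (hQ.trans_le ((min_le_right _ _).trans (min_le_left _ _))).le
  have hQb : Q ≤ 1 / (8 * (K * ((j + 1 : ℕ) + 1)) + 1) :=
    (hQ.trans_le ((min_le_right _ _).trans (min_le_right _ _))).le
  rw [le_div_iff₀ (by positivity)] at hQa hQb
  have hQ2 : Q ^ 2 ≤ Q := by nlinarith
  have hS : 8 * (KK B a * Q * ((j + 1 : ℕ) + 1)) ≤ 1 := by rw [← hKdef]; nlinarith
  obtain ⟨hK, hLh, hBh⟩ := small_aux hQ0.le hS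
  have hs1 : |(1 : ℝ)| ≤ 1 := by simp
  have hs2 : |(-1 : ℝ)| ≤ 1 := by simp
  have hm' : |μ' - dd (j + 1)| ≤ L * Q ^ 2 := by
    have := hfun_bound2 hQ0.le hs2 hK hμ' hA' (by omega)
    have e : μ' - dd (j + 1) = - hfun B a Q (-1) (j + 1) A' := by
      unfold Eqn at hE'
      rw [hA'.one] at hE'
      unfold hfun
      linarith
    rw [e, abs_neg]
    refine this.trans ?_
    rw [hL, ← hKdef]
    gcongr
    norm_num
  obtain ⟨A1, hA1⟩ := ls_exists (B := B) (a := a) (σ := 1) hQ0.le hs1 hK hμ'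
  have hd := hdiff hQ0.le hK hμ' hA1 hA'
  have hl := hfun_lip hQ0.le hs1 hK hμ hμ' hA hA1
  have hp := h1 Q μ' hQ0 hQ1 hm'
  set D := hfun B a Q 1 (j + 1) A1 - hfun B a Q (-1) (j + 1) A' with hD
  set W := th B a Q 1 μ' (j + 1) * th B a Q (-1) μ' (j + 1) with hW
  have hp' : |W - P2| ≤ C1 * Q ^ 2 := hp
  rw [prod_pp] at hd
  have hd' : W * D = N * Q ^ (2 * j + 3) := by rw [hd, hN]; ring
  have hWl : P2 / 2 ≤ W := by
    have := (abs_le.1 hp').1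
    nlinarith
  have hWpos : 0 < W := by linarith
  have hDT : |D - N / P2 * Q ^ (2 * j + 3)| ≤ C2 * Q ^ (2 * j + 5) := by
    have e : D - N / P2 * Q ^ (2 * j + 3) = (P2 - W) * (N * Q ^ (2 * j + 3)) / (W * P2) := by
      have : D = N * Q ^ (2 * j + 3) / W := by rw [eq_div_iff hWpos.ne']; linarith
      rw [this]
      field_simp
    rw [e, abs_div, abs_mul, abs_mul, abs_of_pos (by positivity : 0 < W * P2),
      abs_of_pos (by positivity : 0 < Q ^ (2 * j + 3)), abs_sub_comm, div_le_iff₀ (by positivity)]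
    calc |W - P2| * (|N| * Q ^ (2 * j + 3)) ≤ (C1 * Q ^ 2) * (|N| * Q ^ (2 * j + 3)) := by gcongr
      _ = C2 * Q ^ (2 * j + 5) * (P2 / 2 * P2) := by rw [hC2]; field_simp; ring
      _ ≤ _ := by gcongr
  have hmain : |(μ' - μ) - D| ≤ L * Q ^ 2 * |μ - μ'| := by
    have e : (μ' - μ) - D = hfun B a Q 1 (j + 1) A - hfun B a Q 1 (j + 1) A1 := by
      unfold Eqn at hE hE'
      rw [hA'.one] at hE'
      rw [hA.one] at hE
      rw [hD]
      have e1 : hfun B a Q 1 (j + 1) A = dd (j + 1) - μ := by unfold hfun; linarith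
      have e2 : hfun B a Q (-1) (j + 1) A' = dd (j + 1) - μ' := by unfold hfun; linarith
      rw [e1, e2]; ring
    rw [e]
    exact hl
  have hLQ : L * Q ^ 2 ≤ 1 / 2 := hLh
  have hDb : |D| ≤ (|N / P2| + C2) * Q ^ (2 * j + 3) := by
    have e : D = N / P2 * Q ^ (2 * j + 3) + (D - N / P2 * Q ^ (2 * j + 3)) := by ring
    rw [e]
    refine (abs_add_le _ _).trans ?_
    rw [abs_mul, abs_of_pos (by positivity : 0 < Q ^ (2 * j + 3))]
    have : C2 * Q ^ (2 * j + 5) ≤ C2 * Q ^ (2 * j + 3) := by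
      gcongr ?_ * ?_
      exact pow_le_pow_of_le_one hQ0.le hQ1 (by omega)
    linarith
  have hΔ : |μ - μ'| ≤ 2 * ((|N / P2| + C2) * Q ^ (2 * j + 3)) := by
    have h4 := abs_sub_abs_le_abs_sub (μ' - μ) D
    rw [abs_sub_comm μ' μ] at h4
    have h6 : L * Q ^ 2 * |μ - μ'| ≤ 1 / 2 * |μ - μ'| :=
      mul_le_mul_of_nonneg_right hLQ (abs_nonneg _)
    linarith
  have hfin : |(μ' - μ) - N / P2 * Q ^ (2 * j + 3)| ≤ C3 * Q ^ (2 * j + 5) := by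
    have e : (μ' - μ) - N / P2 * Q ^ (2 * j + 3) = ((μ' - μ) - D) + (D - N / P2 * Q ^ (2 * j + 3)) := by ring
    rw [e]
    refine (abs_add_le _ _).trans ?_
    calc _ ≤ L * Q ^ 2 * (2 * ((|N / P2| + C2) * Q ^ (2 * j + 3))) + C2 * Q ^ (2 * j + 5) := by
          gcongr
          refine hmain.trans ?_
          gcongr
      _ = _ := by rw [hC3]; ring
  have h5 := abs_abs_sub_abs_le_abs_sub (μ' - μ) (N / P2 * Q ^ (2 * j + 3))
  rw [abs_sub_comm μ' μ, abs_mul, abs_of_pos (by positivity : 0 < Q ^ (2 * j + 3))] at h5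
  rw [hT]
  have : 0 < Q ^ (2 * j + 5) := by positivity
  rw [add_mul]
  linarith

lemma Pi0_sq (j : ℕ) : (Pi0 j) ^ 2 = 16 ^ j * ((2 * j).factorial : ℝ) ^ 2 := by
  have h1 : Pi0 j = (-4) ^ j * ((∏ i ∈ Finset.range j, ((j : ℝ) - i)) * ∏ i ∈ Finset.range j, ((j : ℝ) + 1 + i)) := by
    unfold Pi0
    have : ∀ i ∈ Finset.range j, dd i - dd j = (-4) * (((j : ℝ) - i) * ((j : ℝ) + 1 + i)) := by
      intro i _
      unfold dd; ring
    rw [Finset.prod_congr rfl this, Finset.prod_mul_distrib, Finset.prod_mul_distrib,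
      Finset.prod_const, Finset.card_range]
  have h2 : ∏ i ∈ Finset.range j, ((j : ℝ) - i) = (j.factorial : ℝ) := by
    rw [← Nat.descFactorial_self, Nat.descFactorial_eq_prod_range]
    push_cast
    refine Finset.prod_congr rfl fun i hi => ?_
    rw [Nat.cast_sub (Finset.mem_range.1 hi).le]
  have h3 : ∏ i ∈ Finset.range j, ((j : ℝ) + 1 + i) = ((j + 1).ascFactorial j : ℝ) := by
    rw [Nat.ascFactorial_eq_prod_range]
    push_cast
    rfl
  have h4 : (j.factorial : ℝ) * ((j + 1).ascFactorial j : ℝ) = ((2 * j).factorial : ℝ) := by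
    rw [two_mul]
    exact_mod_cast Nat.factorial_mul_ascFactorial j j
  rw [h1, h2, h3, h4, mul_pow, ← pow_mul, mul_comm j 2, pow_mul]
  norm_num

/-! ### The differential equation and Fourier coefficients -/

def psi (α θ n x : ℝ) : ℝ := Real.exp (-(α * Real.cos (2 * x))) * Real.cos (n * x - θ)

def psi1 (α θ n x : ℝ) : ℝ := Real.exp (-(α * Real.cos (2 * x))) *
  (2 * α * Real.sin (2 * x) * Real.cos (n * x - θ) - n * Real.sin (n * x - θ))

def psi2 (α θ n x : ℝ) : ℝ := Real.exp (-(α * Real.cos (2 * x))) *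
  (2 * α * Real.sin (2 * x) * (2 * α * Real.sin (2 * x) * Real.cos (n * x - θ)
      - n * Real.sin (n * x - θ)) +
    (4 * α * Real.cos (2 * x) * Real.cos (n * x - θ) - 2 * α * Real.sin (2 * x) *
      (n * Real.sin (n * x - θ)) - n ^ 2 * Real.cos (n * x - θ)))

lemma hd_cos2 (x : ℝ) : HasDerivAt (fun x => Real.cos (2 * x)) (-(2 * Real.sin (2 * x))) x := by
  have := ((hasDerivAt_id x).const_mul 2).cos
  simp only [id] at this
  convert this using 1; ring

lemma hd_sin2 (x : ℝ) : HasDerivAt (fun x => Real.sin (2 * x)) (2 * Real.cos (2 * x)) x := by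
  have := ((hasDerivAt_id x).const_mul 2).sin
  simp only [id] at this
  convert this using 1; ring

lemma hd_cosn (n θ x : ℝ) :
    HasDerivAt (fun x => Real.cos (n * x - θ)) (-(n * Real.sin (n * x - θ))) x := by
  have := (((hasDerivAt_id x).const_mul n).sub_const θ).cos
  simp only [id] at this
  convert this using 1; ring

lemma hd_sinn (n θ x : ℝ) :
    HasDerivAt (fun x => Real.sin (n * x - θ)) (n * Real.cos (n * x - θ)) x := by
  have := (((hasDerivAt_id x).const_mul n).sub_const θ).sin
  simp only [id] at this
  convert this using 1; ring

lemma hd_exp (α x : ℝ) : HasDerivAt (fun x => Real.exp (-(α * Real.cos (2 * x))))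
    (Real.exp (-(α * Real.cos (2 * x))) * (2 * α * Real.sin (2 * x))) x := by
  have := ((hd_cos2 x).const_mul α).neg.exp
  refine HasDerivAt.congr_deriv (f := fun x => Real.exp (-(α * Real.cos (2 * x)))) this ?_
  simp only [Pi.neg_apply]; ring

lemma hd_psi (α θ n x : ℝ) : HasDerivAt (psi α θ n) (psi1 α θ n x) x := by
  have := (hd_exp α x).mul (hd_cosn n θ x)
  refine HasDerivAt.congr_deriv (f := psi α θ n) this ?_
  unfold psi1; ring

lemma hd_psi1 (α θ n x : ℝ) : HasDerivAt (psi1 α θ n) (psi2 α θ n x) x := by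
  have := (hd_exp α x).mul ((((hd_sin2 x).const_mul (2 * α)).mul (hd_cosn n θ x)).sub
    ((hd_sinn n θ x).const_mul n))
  refine HasDerivAt.congr_deriv (f := psi1 α θ n) this ?_
  unfold psi2; simp only [Pi.mul_apply, Pi.sub_apply]; ring

lemma cont_psi (α θ n : ℝ) : Continuous (psi α θ n) := by unfold psi; fun_prop
lemma cont_psi2 (α θ n : ℝ) : Continuous (psi2 α θ n) := by unfold psi2; fun_prop

def vB (B a Q x : ℝ) : ℝ := -(2 * B * Q) * Real.cos (2 * x) - 2 * (a * Q) ^ 2 * Real.cos (4 * x)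

lemma cos4 (x : ℝ) : Real.cos (4 * x) = Real.cos (2 * x) ^ 2 - Real.sin (2 * x) ^ 2 := by
  rw [show 4 * x = 2 * (2 * x) by ring, Real.cos_two_mul']

lemma psi_ode (B a Q θ n μ x : ℝ) :
    psi2 (a * Q) θ n x + ((μ - 2 * (a * Q) ^ 2) - vB B a Q x) * psi (a * Q) θ n x =
    (μ - n ^ 2) * psi (a * Q) θ n x + Q * (B + 2 * a * (1 - n)) * psi (a * Q) θ (n - 2) x +
      Q * (B + 2 * a * (1 + n)) * psi (a * Q) θ (n + 2) x := by
  have e1 : Real.cos ((n - 2) * x - θ) = Real.cos (n * x - θ) * Real.cos (2 * x) +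
      Real.sin (n * x - θ) * Real.sin (2 * x) := by
    rw [← Real.cos_sub]; congr 1; ring
  have e2 : Real.cos ((n + 2) * x - θ) = Real.cos (n * x - θ) * Real.cos (2 * x) -
      Real.sin (n * x - θ) * Real.sin (2 * x) := by
    rw [← Real.cos_add]; congr 1; ring
  have h := Real.sin_sq_add_cos_sq (2 * x)
  unfold psi psi2 vB
  rw [e1, e2, cos4]
  linear_combination (2 * (a * Q) ^ 2 * Real.exp (-(a * Q * Real.cos (2 * x))) *
    Real.cos (n * x - θ)) * h

/-- `k`-th coefficient of `f` in the sector `θ`. -/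
def co (α θ : ℝ) (f : ℝ → ℝ) (k : ℕ) : ℝ := ∫ x in (0 : ℝ)..π, f x * psi α θ (2 * k + 1) x

def Sec (σ θ : ℝ) : Prop := |σ| ≤ 1 ∧ ∀ x, Real.cos (x + θ) = σ * Real.cos (x - θ)

lemma sec_cos : Sec 1 0 := ⟨by simp, fun x => by simp⟩
lemma sec_sin : Sec (-1) (π / 2) := ⟨by simp, fun x => by
  rw [Real.cos_add_pi_div_two, Real.cos_sub_pi_div_two]; ring⟩

lemma cos_odd (θ : ℝ) (k : ℕ) (x : ℝ) :
    Real.cos ((2 * (k : ℝ) + 1) * (x + π) - θ) = -Real.cos ((2 * (k : ℝ) + 1) * x - θ) := by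
  rw [show (2 * (k : ℝ) + 1) * (x + π) - θ = ((2 * (k : ℝ) + 1) * x - θ + π) + k * (2 * π) by ring,
    Real.cos_add_nat_mul_two_pi, Real.cos_add_pi]

lemma sin_odd (θ : ℝ) (k : ℕ) (x : ℝ) :
    Real.sin ((2 * (k : ℝ) + 1) * (x + π) - θ) = -Real.sin ((2 * (k : ℝ) + 1) * x - θ) := by
  rw [show (2 * (k : ℝ) + 1) * (x + π) - θ = ((2 * (k : ℝ) + 1) * x - θ + π) + k * (2 * π) by ring,
    Real.sin_add_nat_mul_two_pi, Real.sin_add_pi]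

lemma cos2_per (x : ℝ) : Real.cos (2 * (x + π)) = Real.cos (2 * x) := by
  rw [mul_add, Real.cos_add_two_pi]
lemma sin2_per (x : ℝ) : Real.sin (2 * (x + π)) = Real.sin (2 * x) := by
  rw [mul_add, Real.sin_add_two_pi]

lemma cont_f {v : ℝ → ℝ} {lam : ℝ} {f : ℝ → ℝ} (hf : IsSemiEF v lam f) : Continuous f :=
  hf.1.continuous

lemma co_zero_int {B a Q θ μ : ℝ} {f : ℝ → ℝ} (hf : IsSemiEF (vB B a Q) (μ - 2 * (a * Q) ^ 2) f)
    (k : ℕ) : ∫ x in (0 : ℝ)..π, f x * (psi2 (a * Q) θ (2 * k + 1) x +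
      ((μ - 2 * (a * Q) ^ 2) - vB B a Q x) * psi (a * Q) θ (2 * k + 1) x) = 0 := by
  obtain ⟨hc, hode, hper⟩ := hf
  have hd0 : ∀ x, HasDerivAt f (deriv f x) x := fun x =>
    ((hc.differentiable (by norm_num)) x).hasDerivAt
  have hd1 : ∀ x, HasDerivAt (deriv f) (deriv (deriv f) x) x := fun x =>
    (hc.differentiable_deriv_two x).hasDerivAt
  have hper1 : deriv f π = - deriv f 0 := by
    have h1 : deriv (fun x => f (x + π)) 0 = deriv f (0 + π) := deriv_comp_add_const _ _ _
    have h2 : (fun x => f (x + π)) = fun x => - f x := funext hper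
    rw [h2, deriv.fun_neg, zero_add] at h1
    exact h1.symm
  set n : ℝ := 2 * (k : ℝ) + 1 with hn
  have hF : ∀ x ∈ Set.uIcc 0 π, HasDerivAt
      (fun x => f x * psi1 (a * Q) θ n x - deriv f x * psi (a * Q) θ n x)
      (f x * (psi2 (a * Q) θ n x + ((μ - 2 * (a * Q) ^ 2) - vB B a Q x) * psi (a * Q) θ n x)) x := by
    intro x _
    have := ((hd0 x).mul (hd_psi1 (a * Q) θ n x)).sub ((hd1 x).mul (hd_psi (a * Q) θ n x))
    refine HasDerivAt.congr_deriv
      (f := fun x => f x * psi1 (a * Q) θ n x - deriv f x * psi (a * Q) θ n x) this ?_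
    have h2 := hode x
    have : deriv (deriv f) x = vB B a Q x * f x - (μ - 2 * (a * Q) ^ 2) * f x := by linarith
    rw [this]
    ring
  have hcint : Continuous fun x => (f x * (psi2 (a * Q) θ n x +
      ((μ - 2 * (a * Q) ^ 2) - vB B a Q x) * psi (a * Q) θ n x)) := by
    have h1 := hc.continuous
    have h2 := cont_psi (a * Q) θ n
    have h3 := cont_psi2 (a * Q) θ n
    have h4 : Continuous (vB B a Q) := by unfold vB; fun_prop
    fun_prop
  rw [intervalIntegral.integral_eq_sub_of_hasDerivAt hF (hcint.intervalIntegrable _ _)]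
  have e0 : f π = - f 0 := by have := hper 0; rwa [zero_add] at this
  have c1 := cos_odd θ k 0
  have s1 := sin_odd θ k 0
  rw [← hn] at c1 s1
  have c2 := cos2_per 0
  have s2 := sin2_per 0
  rw [zero_add] at c1 s1 c2 s2
  rw [hper1, e0]
  unfold psi psi1
  rw [c1, s1, c2, s2]
  ring

lemma co_eqn {B a Q σ θ μ : ℝ} {f : ℝ → ℝ} (hs : Sec σ θ)
    (hf : IsSemiEF (vB B a Q) (μ - 2 * (a * Q) ^ 2) f) (k : ℕ) :
    Eqn B a Q σ μ (co (a * Q) θ f) k := by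
  have h := co_zero_int (θ := θ) hf k
  have hcf := cont_f hf
  have hi : ∀ n, IntervalIntegrable (fun x => f x * psi (a * Q) θ n x) MeasureTheory.volume 0 π :=
    fun n => (hcf.mul (cont_psi _ _ _)).intervalIntegrable _ _
  set n : ℝ := 2 * (k : ℝ) + 1 with hn
  have e : ∀ x, f x * (psi2 (a * Q) θ n x +
      ((μ - 2 * (a * Q) ^ 2) - vB B a Q x) * psi (a * Q) θ n x) =
      (μ - n ^ 2) * (f x * psi (a * Q) θ n x) +
      Q * (B + 2 * a * (1 - n)) * (f x * psi (a * Q) θ (n - 2) x) +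
      Q * (B + 2 * a * (1 + n)) * (f x * psi (a * Q) θ (n + 2) x) := by
    intro x; rw [psi_ode]; ring
  simp_rw [e] at h
  rw [intervalIntegral.integral_add (((hi _).const_mul _).add ((hi _).const_mul _)) ((hi _).const_mul _),
    intervalIntegral.integral_add ((hi _).const_mul _) ((hi _).const_mul _),
    intervalIntegral.integral_const_mul, intervalIntegral.integral_const_mul,
    intervalIntegral.integral_const_mul] at h
  have e1 : ∫ x in (0 : ℝ)..π, f x * psi (a * Q) θ (n + 2) x = co (a * Q) θ f (k + 1) := by
    unfold co
    have : n + 2 = 2 * ((k + 1 : ℕ) : ℝ) + 1 := by rw [hn]; push_cast; ring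
    rw [this]
  have e0 : ∫ x in (0 : ℝ)..π, f x * psi (a * Q) θ n x = co (a * Q) θ f k := rfl
  have e2 : ∫ x in (0 : ℝ)..π, f x * psi (a * Q) θ (n - 2) x = prv σ (co (a * Q) θ f) k := by
    cases k with
    | zero =>
      have : ∀ x, f x * psi (a * Q) θ (n - 2) x = σ * (f x * psi (a * Q) θ (2 * ((0 : ℕ) : ℝ) + 1) x) := by
        intro x
        unfold psi
        have h1 := hs.2 x
        have : (n - 2) * x - θ = -(x + θ) := by rw [hn]; push_cast; ring
        rw [this, Real.cos_neg, h1]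
        push_cast
        rw [show (2 * 0 + 1 : ℝ) * x - θ = x - θ by ring]
        ring
      simp_rw [this]
      rw [intervalIntegral.integral_const_mul]
      rfl
    | succ k =>
      simp only [prv, co]
      have : n - 2 = 2 * (k : ℝ) + 1 := by rw [hn]; push_cast; ring
      rw [this]
  rw [e0, e1, e2] at h
  unfold Eqn dd uu ll
  rw [hn] at h
  linear_combination -h

lemma co_bdd {α θ : ℝ} {f : ℝ → ℝ} (hf : Continuous f) : Bdd (co α θ f) := by
  obtain ⟨M, hM⟩ := isCompact_uIcc.exists_bound_of_continuousOn
    (f := fun x => f x * Real.exp (-(α * Real.cos (2 * x)))) (s := Set.uIcc 0 π)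
    (by fun_prop)
  refine ⟨M * |π - 0|, fun k => ?_⟩
  unfold co
  rw [← Real.norm_eq_abs]
  refine intervalIntegral.norm_integral_le_of_norm_le_const fun x hx => ?_
  have h1 := hM x (Set.uIoc_subset_uIcc hx)
  unfold psi
  rw [← mul_assoc, norm_mul]
  have h2 : ‖Real.cos ((2 * k + 1) * x - θ)‖ ≤ 1 := Real.abs_cos_le_one _
  nlinarith [norm_nonneg (f x * Real.exp (-(α * Real.cos (2 * x)))),
    norm_nonneg (Real.cos ((2 * k + 1) * x - θ))]

/-- completeness -/
lemma complete_aux {g : ℝ → ℝ} (hg : Continuous g) (hper : ∀ x, g (x + π) = - g x)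
    (hc : ∀ k : ℕ, ∫ x in (0 : ℝ)..π, g x * Real.cos ((2 * k + 1) * x) = 0)
    (hs : ∀ k : ℕ, ∫ x in (0 : ℝ)..π, g x * Real.sin ((2 * k + 1) * x) = 0) : ∀ x, g x = 0 := by
  have : Fact (0 < π) := ⟨Real.pi_pos⟩
  have hcz : ∀ n : ℤ, ∫ x in (0 : ℝ)..π, g x * Real.cos ((2 * n - 1) * x) = 0 := by
    intro n
    rcases lt_or_ge 0 n with h | h
    · obtain ⟨k, rfl⟩ : ∃ k : ℕ, n = k + 1 := ⟨(n - 1).toNat, by omega⟩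
      refine Eq.trans ?_ (hc k); push_cast; congr 1; ext x; congr 2; ring
    · obtain ⟨k, rfl⟩ : ∃ k : ℕ, n = -k := ⟨(-n).toNat, by omega⟩
      refine Eq.trans ?_ (hc k); push_cast; congr 1; ext x; rw [← Real.cos_neg]; congr 2; ring
  have hsz : ∀ n : ℤ, ∫ x in (0 : ℝ)..π, g x * Real.sin ((2 * n - 1) * x) = 0 := by
    intro n
    rcases lt_or_ge 0 n with h | h
    · obtain ⟨k, rfl⟩ : ∃ k : ℕ, n = k + 1 := ⟨(n - 1).toNat, by omega⟩
      refine Eq.trans ?_ (hs k); push_cast; congr 1; ext x; congr 2; ring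
    · obtain ⟨k, rfl⟩ : ∃ k : ℕ, n = -k := ⟨(-n).toNat, by omega⟩
      have := hs k
      rw [← neg_eq_zero, ← intervalIntegral.integral_neg] at this
      refine Eq.trans ?_ this; push_cast; congr 1; ext x; rw [← mul_neg, ← Real.sin_neg]; congr 2; ring
  let G : ℝ → ℂ := fun x => Complex.exp (Complex.I * x) * (g x : ℂ)
  have hGc : Continuous G := by
    have : Continuous fun x => (g x : ℂ) := Complex.continuous_ofReal.comp hg
    fun_prop
  have hGp : Function.Periodic G π := by
    intro x
    simp only [G]
    rw [hper]
    push_cast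
    rw [mul_add, Complex.exp_add, mul_comm Complex.I (π : ℂ), Complex.exp_pi_mul_I]
    ring
  let F : C(AddCircle π, ℂ) := ⟨hGp.lift, continuous_coinduced_dom.mpr hGc⟩
  have hF : ∀ x : ℝ, F (x : AddCircle π) = G x := fun x => rfl
  have hcoef : ∀ n, fourierCoeff F n = 0 := by
    intro n
    rw [fourierCoeff_eq_intervalIntegral _ n 0, zero_add]
    have : ∀ x : ℝ, (fourier (-n)) (x : AddCircle π) • F (x : AddCircle π) =
        ((g x * Real.cos ((2 * n - 1) * x) : ℝ) : ℂ) - Complex.I * ((g x * Real.sin ((2 * n - 1) * x) : ℝ) : ℂ) := by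
      intro x
      rw [hF, fourier_coe_apply, smul_eq_mul]
      simp only [G]
      rw [← mul_assoc, ← Complex.exp_add]
      have e : 2 * (π : ℂ) * Complex.I * ((-n : ℤ) : ℂ) * x / π + Complex.I * x =
        ((-((2 * n - 1) * x) : ℝ) : ℂ) * Complex.I := by
          have : (π : ℂ) ≠ 0 := by exact_mod_cast Real.pi_ne_zero
          push_cast
          field_simp
          ring
      rw [e, Complex.exp_mul_I, ← Complex.ofReal_cos, ← Complex.ofReal_sin, Real.cos_neg, Real.sin_neg]
      push_cast
      ring
    simp_rw [this]
    rw [intervalIntegral.integral_sub, intervalIntegral.integral_const_mul,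
      intervalIntegral.integral_ofReal, intervalIntegral.integral_ofReal, hcz, hsz]
    · simp
    · apply Continuous.intervalIntegrable; fun_prop
    · apply Continuous.intervalIntegrable; fun_prop
  have hsum := has_pointwise_sum_fourier_series_of_summable (f := F)
    (by rw [show (fourierCoeff F) = fun _ => 0 from funext hcoef]; exact summable_zero)
  intro x
  have h1 := hsum (x : AddCircle π)
  simp_rw [hcoef, zero_smul] at h1
  have h2 := h1.unique hasSum_zero
  rw [hF] at h2
  simp only [G] at h2
  rcases mul_eq_zero.1 h2 with h3 | h3
  · exact absurd h3 (Complex.exp_ne_zero _)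
  · exact_mod_cast h3

lemma complete {α : ℝ} {f : ℝ → ℝ} (hf : Continuous f) (hper : ∀ x, f (x + π) = - f x)
    (h0 : ∀ k, co α 0 f k = 0) (h1 : ∀ k, co α (π / 2) f k = 0) : f = 0 := by
  have := complete_aux (g := fun x => f x * Real.exp (-(α * Real.cos (2 * x)))) (by fun_prop)
    (fun x => by rw [hper, cos2_per]; ring)
    (fun k => by
      have := h0 k
      unfold co psi at this
      refine Eq.trans ?_ this; congr 1; ext x; rw [sub_zero]; ring)
    (fun k => by
      have := h1 k
      unfold co psi at this
      refine Eq.trans ?_ this; congr 1; ext x; rw [Real.cos_sub_pi_div_two]; ring)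
  ext x
  have h := this x
  rcases mul_eq_zero.1 h with h3 | h3
  · exact h3
  · exact absurd h3 (Real.exp_ne_zero _)

/-! ### Construction of eigenfunctions -/

def uD (D : ℝ) (k : ℕ) : ℝ := 4 * D * (1 / ((k : ℝ) + 1) ^ 2)

lemma uD_summable (D : ℝ) : Summable (uD D) := by
  unfold uD
  refine Summable.mul_left _ ?_
  have := (summable_nat_add_iff 1).mpr (Real.summable_one_div_nat_pow.mpr (one_lt_two))
  simpa using this

lemma uD_bound {A : ℕ → ℝ} {D : ℝ} (hD : ∀ k : ℕ, |A k| * ((k : ℝ) + 1) ^ 4 ≤ D) (k : ℕ) :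
    |A k| ≤ uD D k ∧ |A k| * (2 * k + 1) ≤ uD D k ∧ |A k| * (2 * k + 1) ^ 2 ≤ uD D k := by
  have h := hD k
  have hk : (0 : ℝ) ≤ k := Nat.cast_nonneg k
  have h0 := abs_nonneg (A k)
  have e : |A k| * (4 * ((k : ℝ) + 1) ^ 2) ≤ uD D k := by
    unfold uD
    rw [mul_one_div, le_div_iff₀ (by positivity)]
    nlinarith
  refine ⟨le_trans ?_ e, le_trans ?_ e, le_trans ?_ e⟩
  · exact le_mul_of_one_le_right h0 (by nlinarith)
  · exact mul_le_mul_of_nonneg_left (by nlinarith) h0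
  · exact mul_le_mul_of_nonneg_left (by nlinarith) h0

def t0 (A : ℕ → ℝ) (θ : ℝ) (k : ℕ) (x : ℝ) : ℝ := A k * Real.cos ((2 * k + 1) * x - θ)
def t1 (A : ℕ → ℝ) (θ : ℝ) (k : ℕ) (x : ℝ) : ℝ :=
  A k * (-((2 * k + 1) * Real.sin ((2 * k + 1) * x - θ)))
def t2 (A : ℕ → ℝ) (θ : ℝ) (k : ℕ) (x : ℝ) : ℝ :=
  A k * (-((2 * k + 1) * ((2 * k + 1) * Real.cos ((2 * k + 1) * x - θ))))

lemma t0_bound {A : ℕ → ℝ} {D : ℝ} (hD : ∀ k : ℕ, |A k| * ((k : ℝ) + 1) ^ 4 ≤ D) (θ : ℝ) (k : ℕ)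
    (x : ℝ) : ‖t0 A θ k x‖ ≤ uD D k := by
  refine le_trans ?_ (uD_bound hD k).1
  unfold t0
  rw [Real.norm_eq_abs, abs_mul]
  exact mul_le_of_le_one_right (abs_nonneg _) (Real.abs_cos_le_one _)

lemma t1_bound {A : ℕ → ℝ} {D : ℝ} (hD : ∀ k : ℕ, |A k| * ((k : ℝ) + 1) ^ 4 ≤ D) (θ : ℝ) (k : ℕ)
    (x : ℝ) : ‖t1 A θ k x‖ ≤ uD D k := by
  refine le_trans ?_ (uD_bound hD k).2.1
  unfold t1
  rw [Real.norm_eq_abs, abs_mul, abs_neg, abs_mul, abs_of_nonneg (by positivity : (0 : ℝ) ≤ 2 * k + 1)]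
  refine mul_le_mul_of_nonneg_left ?_ (abs_nonneg _)
  exact mul_le_of_le_one_right (by positivity) (Real.abs_sin_le_one _)

lemma t2_bound {A : ℕ → ℝ} {D : ℝ} (hD : ∀ k : ℕ, |A k| * ((k : ℝ) + 1) ^ 4 ≤ D) (θ : ℝ) (k : ℕ)
    (x : ℝ) : ‖t2 A θ k x‖ ≤ uD D k := by
  refine le_trans ?_ (uD_bound hD k).2.2
  unfold t2
  rw [Real.norm_eq_abs, abs_mul, abs_neg, abs_mul, abs_mul,
    abs_of_nonneg (by positivity : (0 : ℝ) ≤ 2 * k + 1), ← mul_assoc (2 * (k : ℝ) + 1), ← sq]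
  refine mul_le_mul_of_nonneg_left ?_ (abs_nonneg _)
  exact mul_le_of_le_one_right (by positivity) (Real.abs_cos_le_one _)

def g0 (A : ℕ → ℝ) (θ : ℝ) (x : ℝ) : ℝ := ∑' k, t0 A θ k x
def g1 (A : ℕ → ℝ) (θ : ℝ) (x : ℝ) : ℝ := ∑' k, t1 A θ k x
def g2 (A : ℕ → ℝ) (θ : ℝ) (x : ℝ) : ℝ := ∑' k, t2 A θ k x

lemma t_summable {t : ℕ → ℝ} {D : ℝ} (h : ∀ k, ‖t k‖ ≤ uD D k) : Summable t :=
  Summable.of_norm_bounded (uD_summable D) h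

lemma hd_g0 {A : ℕ → ℝ} {D : ℝ} (hD : ∀ k : ℕ, |A k| * ((k : ℝ) + 1) ^ 4 ≤ D) (θ x : ℝ) :
    HasDerivAt (g0 A θ) (g1 A θ x) x :=
  hasDerivAt_tsum (g := t0 A θ) (g' := t1 A θ) (y₀ := 0) (uD_summable D)
    (fun k _ => (hd_cosn _ _ _).const_mul (A k))
    (fun k y => t1_bound hD θ k y) (t_summable (fun k => t0_bound hD θ k 0)) x

lemma hd_g1 {A : ℕ → ℝ} {D : ℝ} (hD : ∀ k : ℕ, |A k| * ((k : ℝ) + 1) ^ 4 ≤ D) (θ x : ℝ) :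
    HasDerivAt (g1 A θ) (g2 A θ x) x :=
  hasDerivAt_tsum (g := t1 A θ) (g' := t2 A θ) (y₀ := 0) (uD_summable D)
    (fun k _ => (((hd_sinn _ _ _).const_mul _).neg).const_mul (A k))
    (fun k y => t2_bound hD θ k y) (t_summable (fun k => t1_bound hD θ k 0)) x

def Zk (B a Q σ θ : ℝ) (A : ℕ → ℝ) (x : ℝ) (k : ℕ) : ℝ :=
  Q * (B + 4 * a * k) * A k * Real.cos ((2 * k - 1) * x - θ) -
    ll B a Q k * prv σ A k * Real.cos ((2 * k + 1) * x - θ)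

lemma term_tele {B a Q σ θ μ : ℝ} {A : ℕ → ℝ} (hA : ∀ k, Eqn B a Q σ μ A k) (x : ℝ) (k : ℕ) :
    t2 A θ k x - 4 * (a * Q) * Real.sin (2 * x) * t1 A θ k x +
      (μ + (2 * B * Q - 4 * (a * Q)) * Real.cos (2 * x)) * t0 A θ k x =
    Zk B a Q σ θ A x k - Zk B a Q σ θ A x (k + 1) := by
  have h := hA k
  unfold Eqn dd uu at h
  set n : ℝ := 2 * (k : ℝ) + 1 with hn
  have e1 : Real.cos ((2 * k - 1) * x - θ) = Real.cos (n * x - θ) * Real.cos (2 * x) +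
      Real.sin (n * x - θ) * Real.sin (2 * x) := by
    rw [← Real.cos_sub]; congr 1; rw [hn]; ring
  have e2 : Real.cos ((2 * ((k + 1 : ℕ) : ℝ) + 1) * x - θ) = Real.cos (n * x - θ) * Real.cos (2 * x) -
      Real.sin (n * x - θ) * Real.sin (2 * x) := by
    rw [← Real.cos_add]; congr 1; rw [hn]; push_cast; ring
  have e3 : Real.cos ((2 * ((k + 1 : ℕ) : ℝ) - 1) * x - θ) = Real.cos (n * x - θ) := by
    congr 1; rw [hn]; push_cast; ring
  unfold t0 t1 t2 Zk
  rw [e1, e2, e3]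
  simp only [prv, ll] at h ⊢
  push_cast
  rw [hn] at h ⊢
  linear_combination -Real.cos ((2 * (k : ℝ) + 1) * x - θ) * h

lemma Zk_zero {B a Q σ θ : ℝ} {A : ℕ → ℝ} (hs : Sec σ θ) (x : ℝ) : Zk B a Q σ θ A x 0 = 0 := by
  unfold Zk ll
  simp only [prv]
  push_cast
  rw [show (2 * 0 - 1) * x - θ = -(x + θ) by ring, Real.cos_neg, hs.2,
    show (2 * 0 + 1) * x - θ = x - θ by ring]
  ring

lemma Zk_lim {B a Q σ θ : ℝ} {A : ℕ → ℝ} {D : ℝ} (hD : ∀ k : ℕ, |A k| * ((k : ℝ) + 1) ^ 4 ≤ D)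
    (x : ℝ) : Filter.Tendsto (Zk B a Q σ θ A x) Filter.atTop (nhds 0) := by
  have hu : Filter.Tendsto (uD D) Filter.atTop (nhds 0) := (uD_summable D).tendsto_atTop_zero
  have hX : ∀ k : ℕ, |Q * (B + 4 * a * k) * A k * Real.cos ((2 * k - 1) * x - θ)| ≤
      |Q| * (|B| + 4 * |a|) * uD D k := by
    intro k
    have hb := (uD_bound hD k).2.1
    have h1 : |B + 4 * a * k| ≤ (|B| + 4 * |a|) * (2 * k + 1) := by
      have := abs_add_le B (4 * a * k)
      rw [abs_mul, abs_mul, abs_of_nonneg (by norm_num : (0 : ℝ) ≤ 4), abs_of_nonneg (Nat.cast_nonneg k : (0 : ℝ) ≤ (k : ℝ))] at this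
      have hk : (0 : ℝ) ≤ k := Nat.cast_nonneg k
      have := abs_nonneg B; have := abs_nonneg a
      nlinarith [mul_nonneg (abs_nonneg B) hk, mul_nonneg (abs_nonneg a) hk]
    rw [abs_mul, abs_mul, abs_mul]
    calc _ ≤ |Q| * |B + 4 * a * k| * |A k| * 1 := by
          gcongr; exact Real.abs_cos_le_one _
      _ ≤ |Q| * ((|B| + 4 * |a|) * (2 * k + 1)) * |A k| * 1 := by gcongr
      _ = |Q| * (|B| + 4 * |a|) * (|A k| * (2 * k + 1)) := by ring
      _ ≤ _ := by gcongr
  have hY : ∀ k : ℕ, |ll B a Q (k + 1) * prv σ A (k + 1) *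
      Real.cos ((2 * ((k + 1 : ℕ) : ℝ) + 1) * x - θ)| ≤
      |Q| * (|B| + 4 * |a|) * uD D k := by
    intro k
    have hb := (uD_bound hD k).2.1
    have h1 : |B - 4 * a * ((k + 1 : ℕ) : ℝ)| ≤ (|B| + 4 * |a|) * (2 * k + 1) := by
      have := abs_sub B (4 * a * ((k + 1 : ℕ) : ℝ))
      rw [abs_mul, abs_mul, abs_of_nonneg (by norm_num : (0 : ℝ) ≤ 4), abs_of_nonneg (Nat.cast_nonneg (k + 1) : (0 : ℝ) ≤ ((k + 1 : ℕ) : ℝ))] at this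
      push_cast at this ⊢
      have hk : (0 : ℝ) ≤ k := Nat.cast_nonneg k
      have := abs_nonneg B; have := abs_nonneg a
      nlinarith [mul_nonneg (abs_nonneg B) hk, mul_nonneg (abs_nonneg a) hk]
    simp only [prv, ll]
    rw [abs_mul, abs_mul, abs_mul]
    calc _ ≤ |Q| * |B - 4 * a * ((k + 1 : ℕ) : ℝ)| * |A k| * 1 := by
          gcongr; exact Real.abs_cos_le_one _
      _ ≤ |Q| * ((|B| + 4 * |a|) * (2 * k + 1)) * |A k| * 1 := by gcongr
      _ = |Q| * (|B| + 4 * |a|) * (|A k| * (2 * k + 1)) := by ring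
      _ ≤ _ := by gcongr
  have hw : Filter.Tendsto (fun k => |Q| * (|B| + 4 * |a|) * uD D k) Filter.atTop (nhds 0) := by
    simpa using hu.const_mul (|Q| * (|B| + 4 * |a|))
  have hX' := squeeze_zero_norm (f := fun k : ℕ => Q * (B + 4 * a * k) * A k * Real.cos ((2 * k - 1) * x - θ)) hX hw
  have hY' := squeeze_zero_norm (f := fun k : ℕ => ll B a Q (k + 1) * prv σ A (k + 1) *
      Real.cos ((2 * ((k + 1 : ℕ) : ℝ) + 1) * x - θ)) hY hw
  rw [← Filter.tendsto_add_atTop_iff_nat 1]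
  have := ((Filter.tendsto_add_atTop_iff_nat 1).mpr hX').sub hY'
  rw [sub_zero] at this
  exact this

lemma g_ode {B a Q σ θ μ D : ℝ} {A : ℕ → ℝ} (hs : Sec σ θ) (hA : ∀ k, Eqn B a Q σ μ A k)
    (hD : ∀ k : ℕ, |A k| * ((k : ℝ) + 1) ^ 4 ≤ D) (x : ℝ) :
    g2 A θ x - 4 * (a * Q) * Real.sin (2 * x) * g1 A θ x +
      (μ + (2 * B * Q - 4 * (a * Q)) * Real.cos (2 * x)) * g0 A θ x = 0 := by
  have s0 := (t_summable (fun k => t0_bound hD θ k x)).hasSum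
  have s1 := (t_summable (fun k => t1_bound hD θ k x)).hasSum
  have s2 := (t_summable (fun k => t2_bound hD θ k x)).hasSum
  have s := ((s2.sub (s1.mul_left (4 * (a * Q) * Real.sin (2 * x)))).add
    (s0.mul_left (μ + (2 * B * Q - 4 * (a * Q)) * Real.cos (2 * x)))).tendsto_sum_nat
  have e : ∀ n, ∑ k ∈ Finset.range n, (t2 A θ k x - 4 * (a * Q) * Real.sin (2 * x) * t1 A θ k x +
      (μ + (2 * B * Q - 4 * (a * Q)) * Real.cos (2 * x)) * t0 A θ k x) = - Zk B a Q σ θ A x n := by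
    intro n
    rw [Finset.sum_congr rfl (fun k _ => term_tele (σ := σ) hA x k), Finset.sum_range_sub',
      Zk_zero hs, zero_sub]
  simp_rw [e] at s
  have z := (Zk_lim (B := B) (a := a) (Q := Q) (σ := σ) (θ := θ) hD x).neg
  rw [neg_zero] at z
  exact tendsto_nhds_unique s z

/-- The eigenfunction built from a coefficient sequence. -/
def efun (α θ : ℝ) (A : ℕ → ℝ) (x : ℝ) : ℝ := Real.exp (-(-α * Real.cos (2 * x))) * g0 A θ x

lemma efun_semi {B a Q σ θ μ D : ℝ} {A : ℕ → ℝ} (hs : Sec σ θ) (hA : ∀ k, Eqn B a Q σ μ A k)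
    (hD : ∀ k : ℕ, |A k| * ((k : ℝ) + 1) ^ 4 ≤ D) :
    IsSemiEF (vB B a Q) (μ - 2 * (a * Q) ^ 2) (efun (a * Q) θ A) := by
  set α := a * Q with hα
  let f1 : ℝ → ℝ := fun x => Real.exp (-(-α * Real.cos (2 * x))) *
    (g1 A θ x - 2 * α * Real.sin (2 * x) * g0 A θ x)
  have hd1 : ∀ x, HasDerivAt (efun α θ A) (f1 x) x := by
    intro x
    have := (hd_exp (-α) x).mul (hd_g0 hD θ x)
    refine HasDerivAt.congr_deriv (f := efun α θ A) this ?_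
    simp only [f1]; ring
  have hd2 : ∀ x, HasDerivAt f1 ((vB B a Q x - (μ - 2 * α ^ 2)) * efun α θ A x) x := by
    intro x
    have := (hd_exp (-α) x).mul ((hd_g1 hD θ x).sub
      (((hd_sin2 x).const_mul (2 * α)).mul (hd_g0 hD θ x)))
    refine HasDerivAt.congr_deriv (f := f1) this ?_
    have ho := g_ode hs hA hD x
    rw [← hα] at ho
    have h := Real.sin_sq_add_cos_sq (2 * x)
    have hv : vB B a Q x = -(2 * B * Q) * Real.cos (2 * x) - 2 * α ^ 2 *
      (Real.cos (2 * x) ^ 2 - Real.sin (2 * x) ^ 2) := by unfold vB; rw [cos4]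
    simp only [Pi.mul_apply, Pi.sub_apply]
    rw [hv]
    unfold efun
    linear_combination Real.exp (-(-α * Real.cos (2 * x))) * ho +
      Real.exp (-(-α * Real.cos (2 * x))) * g0 A θ x * 2 * α ^ 2 * h
  have e1 : deriv (efun α θ A) = f1 := funext fun x => (hd1 x).deriv
  have e2 : deriv f1 = fun x => (vB B a Q x - (μ - 2 * α ^ 2)) * efun α θ A x :=
    funext fun x => (hd2 x).deriv
  have hdf : Differentiable ℝ (efun α θ A) := fun x => (hd1 x).differentiableAt
  refine ⟨?_, fun x => ?_, fun x => ?_⟩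
  · rw [show (2 : WithTop ℕ∞) = 1 + 1 by norm_num, contDiff_succ_iff_deriv]
    refine ⟨hdf, by simp, ?_⟩
    rw [e1, contDiff_one_iff_deriv, e2]
    refine ⟨fun x => (hd2 x).differentiableAt, ?_⟩
    have h4 : Continuous (vB B a Q) := by unfold vB; fun_prop
    have := hdf.continuous
    fun_prop
  · rw [e1, e2]; ring
  · unfold efun g0
    rw [cos2_per]
    have : ∀ k, t0 A θ k (x + π) = - t0 A θ k x := by
      intro k; unfold t0; rw [cos_odd]; ring
    simp_rw [this]
    rw [tsum_neg]; ring

lemma int_cos_nat (n : ℤ) (hn : n ≠ 0) (β : ℝ) (he : Even n) :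
    ∫ x in (0 : ℝ)..π, Real.cos (n * x - β) = 0 := by
  obtain ⟨l, rfl⟩ := he
  have hl : ((l + l : ℤ) : ℝ) ≠ 0 := by exact_mod_cast hn
  have hF : ∀ x ∈ Set.uIcc 0 π, HasDerivAt
      (fun x => Real.sin (((l + l : ℤ) : ℝ) * x - β) / ((l + l : ℤ) : ℝ))
      (Real.cos (((l + l : ℤ) : ℝ) * x - β)) x := by
    intro x _
    refine HasDerivAt.congr_deriv ((hd_sinn _ β x).div_const _) ?_
    field_simp
  rw [intervalIntegral.integral_eq_sub_of_hasDerivAt hF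
    (Continuous.intervalIntegrable (by fun_prop) _ _)]
  have : ((l + l : ℤ) : ℝ) * π - β = (((l + l : ℤ) : ℝ) * 0 - β) + l * (2 * π) := by
    push_cast; ring
  rw [this, Real.sin_add_int_mul_two_pi]
  ring

lemma int_orth (k j : ℕ) (θ θ' : ℝ) :
    ∫ x in (0 : ℝ)..π, Real.cos ((2 * k + 1) * x - θ) * Real.cos ((2 * j + 1) * x - θ') =
      if k = j then π / 2 * Real.cos (θ - θ') else 0 := by
  have e : ∀ x, Real.cos ((2 * k + 1) * x - θ) * Real.cos ((2 * j + 1) * x - θ') =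
      (1 / 2) * Real.cos (((2 * (k + j + 1) : ℤ) : ℝ) * x - (θ + θ')) +
      (1 / 2) * Real.cos (((2 * (k - j) : ℤ) : ℝ) * x - (θ - θ')) := by
    intro x
    have h1 : ((2 * (k + j + 1) : ℤ) : ℝ) * x - (θ + θ') =
      ((2 * k + 1) * x - θ) + ((2 * j + 1) * x - θ') := by push_cast; ring
    have h2 : ((2 * (k - j) : ℤ) : ℝ) * x - (θ - θ') =
      ((2 * k + 1) * x - θ) - ((2 * j + 1) * x - θ') := by push_cast; ring
    rw [h1, h2, Real.cos_add, Real.cos_sub ((2 * k + 1) * x - θ)]; ring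
  simp_rw [e]
  rw [intervalIntegral.integral_add (Continuous.intervalIntegrable (by fun_prop) _ _)
    (Continuous.intervalIntegrable (by fun_prop) _ _), intervalIntegral.integral_const_mul,
    intervalIntegral.integral_const_mul, int_cos_nat _ (by omega) _ (even_two_mul _)]
  split_ifs with h
  · subst h
    have : Real.cos (θ' - θ) = Real.cos (θ - θ') := by rw [← Real.cos_neg]; congr 1; ring
    simp [this]
    ring
  · rw [int_cos_nat _ (by omega) _ (even_two_mul _)]; simp

lemma efun_co {θ θ' D α : ℝ} {A : ℕ → ℝ}
    (hD : ∀ k : ℕ, |A k| * ((k : ℝ) + 1) ^ 4 ≤ D) (j : ℕ) :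
    co α θ' (efun α θ A) j = A j * (π / 2 * Real.cos (θ - θ')) := by
  have e : ∀ x, efun α θ A x * psi α θ' (2 * j + 1) x =
      g0 A θ x * Real.cos ((2 * j + 1) * x - θ') := by
    intro x
    unfold efun psi
    have : Real.exp (-(-α * Real.cos (2 * x))) * Real.exp (-(α * Real.cos (2 * x))) = 1 := by
      rw [← Real.exp_add]; simp
    linear_combination g0 A θ x * Real.cos ((2 * j + 1) * x - θ') * this
  unfold co
  simp_rw [e]
  have h := intervalIntegral.hasSum_integral_of_dominated_convergence
    (F := fun k x => t0 A θ k x * Real.cos ((2 * j + 1) * x - θ'))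
    (f := fun x => g0 A θ x * Real.cos ((2 * j + 1) * x - θ')) (a := 0) (b := π)
    (μ := MeasureTheory.volume)
    (fun k _ => uD D k)
    (fun k => by
      apply Continuous.aestronglyMeasurable
      unfold t0; fun_prop)
    (fun k => Filter.Eventually.of_forall fun x _ => by
      rw [norm_mul]
      exact le_trans (mul_le_of_le_one_right (norm_nonneg _) (Real.abs_cos_le_one _))
        (t0_bound hD θ k x))
    (Filter.Eventually.of_forall fun x _ => uD_summable D)
    intervalIntegrable_const
    (Filter.Eventually.of_forall fun x _ =>
      ((t_summable (fun k => t0_bound hD θ k x)).hasSum).mul_right _)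
  have e2 : ∀ k, ∫ x in (0 : ℝ)..π, t0 A θ k x * Real.cos ((2 * j + 1) * x - θ') =
      A k * (if k = j then π / 2 * Real.cos (θ - θ') else 0) := by
    intro k
    rw [← int_orth, ← intervalIntegral.integral_const_mul]
    congr 1; ext x; unfold t0; ring
  simp_rw [e2] at h
  have h2 := hasSum_single (f := fun k => A k * (if k = j then π / 2 * Real.cos (θ - θ') else 0)) j
    (fun k hk => by simp [hk])
  have := h.unique h2
  rw [this]; simp

/-! ### Counting -/

lemma dd_succ (k : ℕ) : dd k + 8 ≤ dd (k + 1) := by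
  unfold dd; push_cast
  have hk : (0 : ℝ) ≤ k := Nat.cast_nonneg k
  nlinarith

lemma dd_mono {i k : ℕ} (h : i ≤ k) : dd i ≤ dd k := by
  unfold dd
  have h1 : (i : ℝ) ≤ k := by exact_mod_cast h
  have hk : (0 : ℝ) ≤ i := Nat.cast_nonneg i
  nlinarith

def Pair (ν : ℕ → ℝ) (x y : ℝ) (p q : ℕ) : Prop :=
  p ≠ q ∧ 1 ≤ p ∧ 1 ≤ q ∧ ν p = x ∧ ν q = y ∧ ∀ n, 1 ≤ n → (ν n = x ∨ ν n = y) → n = p ∨ n = q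

lemma count_step {ν : ℕ → ℝ} {m k p q : ℕ} {μ μ' : ℕ → ℝ} (hmono : ∀ i j, 1 ≤ i → i ≤ j → ν i ≤ ν j)
    (hμ : ∀ k ≤ m, |μ k - dd k| ≤ 1) (hμ' : ∀ k ≤ m, |μ' k - dd k| ≤ 1)
    (hnear : ∀ n, 1 ≤ n → ν n ≤ dd m → ∃ k ≤ m, ν n = μ k ∨ ν n = μ' k)
    (hk : k < m) (hp : Pair ν (μ k) (μ' k) p q)
    (hT : ∀ n, 1 ≤ n → (ν n < dd k - 2 ↔ n ≤ 2 * k)) :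
    (p = 2 * k + 1 ∧ q = 2 * k + 2) ∨ (q = 2 * k + 1 ∧ p = 2 * k + 2) := by
  obtain ⟨hne, hp1, hq1, hνp, hνq, hall⟩ := hp
  have hS := dd_succ k
  have b1 := abs_le.1 (hμ k hk.le)
  have b2 := abs_le.1 (hμ' k hk.le)
  have hin : ∀ n, 1 ≤ n → 2 * k < n → ν n < dd (k + 1) - 2 → n = p ∨ n = q := by
    intro n hn hkn hlt
    have hle : dd (k + 1) ≤ dd m := dd_mono hk
    obtain ⟨i, him, hi⟩ := hnear n hn (by linarith)
    have c1 := abs_le.1 (hμ i him)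
    have c2 := abs_le.1 (hμ' i him)
    rcases lt_trichotomy i k with h | h | h
    · have d1 := dd_mono (show i + 1 ≤ k from h)
      have d2 := dd_succ i
      have : ν n < dd k - 2 := by rcases hi with hi | hi <;> rw [hi] <;> linarith
      have := (hT n hn).1 this
      omega
    · subst h; exact hall n hn hi
    · have d1 := dd_mono (show k + 1 ≤ i from h)
      exfalso
      rcases hi with hi | hi <;> rw [hi] at hlt <;> linarith
  have hpk : 2 * k < p := by
    by_contra h
    have := (hT p hp1).2 (by omega)
    rw [hνp] at this; linarith
  have hqk : 2 * k < q := by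
    by_contra h
    have := (hT q hq1).2 (by omega)
    rw [hνq] at this; linarith
  have hdown : ∀ n, 2 * k < n → (n ≤ p ∨ n ≤ q) → n = p ∨ n = q := by
    intro n hn h
    refine hin n (by omega) hn ?_
    rcases h with h | h
    · have := hmono n p (by omega) h; rw [hνp] at this; linarith
    · have := hmono n q (by omega) h; rw [hνq] at this; linarith
  have r1 := hdown (2 * k + 1) (by omega) (by omega)
  have r2 := hdown (2 * k + 2) (by omega) (by omega)
  omega

lemma count {ν : ℕ → ℝ} {m : ℕ} {μ μ' : ℕ → ℝ} (hmono : ∀ i j, 1 ≤ i → i ≤ j → ν i ≤ ν j)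
    (hμ : ∀ k ≤ m, |μ k - dd k| ≤ 1) (hμ' : ∀ k ≤ m, |μ' k - dd k| ≤ 1)
    (hnear : ∀ n, 1 ≤ n → ν n ≤ dd m → ∃ k ≤ m, ν n = μ k ∨ ν n = μ' k)
    (hpair : ∀ k ≤ m, ∃ p q, Pair ν (μ k) (μ' k) p q) (k : ℕ) :
    k ≤ m → ∀ n, 1 ≤ n → (ν n < dd k - 2 ↔ n ≤ 2 * k) := by
  induction k with
  | zero =>
    intro _ n hn
    refine ⟨fun h => ?_, fun h => by omega⟩
    exfalso
    have h0 := dd_mono (Nat.zero_le m)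
    obtain ⟨i, him, hi⟩ := hnear n hn (by linarith)
    have c1 := abs_le.1 (hμ i him)
    have c2 := abs_le.1 (hμ' i him)
    have := dd_mono (Nat.zero_le i)
    rcases hi with hi | hi <;> rw [hi] at h <;> linarith
  | succ k ih =>
    intro hk n hn
    have hT := ih (by omega)
    obtain ⟨p, q, hp⟩ := hpair k (by omega)
    have hst := count_step hmono hμ hμ' hnear hk hp hT
    obtain ⟨hne, hp1, hq1, hνp, hνq, hall⟩ := hp
    have hS := dd_succ k
    have b1 := abs_le.1 (hμ k (by omega))
    have b2 := abs_le.1 (hμ' k (by omega))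
    constructor
    · intro hlt
      have hle : dd (k + 1) ≤ dd m := dd_mono hk
      obtain ⟨i, him, hi⟩ := hnear n hn (by linarith)
      have c1 := abs_le.1 (hμ i him)
      have c2 := abs_le.1 (hμ' i him)
      rcases lt_trichotomy i k with h | h | h
      · have d1 := dd_mono (show i + 1 ≤ k from h)
        have d2 := dd_succ i
        have : ν n < dd k - 2 := by rcases hi with hi | hi <;> rw [hi] <;> linarith
        have := (hT n hn).1 this
        omega
      · subst h
        have := hall n hn hi
        omega
      · have d1 := dd_mono (show k + 1 ≤ i from h)
        exfalso
        rcases hi with hi | hi <;> rw [hi] at hlt <;> linarith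
    · intro hle
      by_cases h : n ≤ 2 * k
      · have := (hT n hn).2 h; linarith
      · have : n = p ∨ n = q := by omega
        rcases this with h | h
        · rw [h, hνp]; linarith
        · rw [h, hνq]; linarith

lemma count_gap {ν : ℕ → ℝ} {m : ℕ} {μ μ' : ℕ → ℝ} (hmono : ∀ i j, 1 ≤ i → i ≤ j → ν i ≤ ν j)
    (hμ : ∀ k ≤ m, |μ k - dd k| ≤ 1) (hμ' : ∀ k ≤ m, |μ' k - dd k| ≤ 1)
    (hnear : ∀ n, 1 ≤ n → ν n ≤ dd m → ∃ k ≤ m, ν n = μ k ∨ ν n = μ' k)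
    (hpair : ∀ k ≤ m, ∃ p q, Pair ν (μ k) (μ' k) p q) (k : ℕ) (hk : k < m) :
    ν (2 * k + 2) - ν (2 * k + 1) = |μ k - μ' k| := by
  obtain ⟨p, q, hp⟩ := hpair k hk.le
  have hst := count_step hmono hμ hμ' hnear hk hp (count hmono hμ hμ' hnear hpair k hk.le)
  obtain ⟨hne, hp1, hq1, hνp, hνq, hall⟩ := hp
  have hm := hmono (2 * k + 1) (2 * k + 2) (by omega) (by omega)
  rcases hst with ⟨h1, h2⟩ | ⟨h1, h2⟩
  · rw [h1] at hνp; rw [h2] at hνq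
    rw [← hνp, ← hνq, abs_sub_comm, abs_of_nonneg (by linarith)]
  · rw [h2] at hνp; rw [h1] at hνq
    rw [← hνp, ← hνq, abs_of_nonneg (by linarith)]

lemma pair_of_card {ν : ℕ → ℝ} {x y : ℝ}
    (hx : Nat.card {n : ℕ // 1 ≤ n ∧ ν n = x} = 1 + (if x = y then 1 else 0))
    (hy : Nat.card {n : ℕ // 1 ≤ n ∧ ν n = y} = (if y = x then 1 else 0) + 1) :
    ∃ p q, Pair ν x y p q := by
  have ex : Nat.card {n : ℕ // 1 ≤ n ∧ ν n = x} = {n : ℕ | 1 ≤ n ∧ ν n = x}.ncard := rfl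
  have ey : Nat.card {n : ℕ // 1 ≤ n ∧ ν n = y} = {n : ℕ | 1 ≤ n ∧ ν n = y}.ncard := rfl
  rw [ex] at hx
  rw [ey] at hy
  by_cases h : x = y
  · subst h
    rw [if_pos rfl] at hx
    obtain ⟨p, q, hpq, hs⟩ := Set.ncard_eq_two.1 hx
    have hp : p ∈ {n : ℕ | 1 ≤ n ∧ ν n = x} := by rw [hs]; simp
    have hq : q ∈ {n : ℕ | 1 ≤ n ∧ ν n = x} := by rw [hs]; simp
    refine ⟨p, q, hpq, hp.1, hq.1, hp.2, hq.2, fun n hn h => ?_⟩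
    have : n ∈ {n : ℕ | 1 ≤ n ∧ ν n = x} := ⟨hn, by tauto⟩
    rw [hs] at this
    simpa using this
  · rw [if_neg h] at hx
    rw [if_neg (Ne.symm h)] at hy
    obtain ⟨p, hsp⟩ := Set.ncard_eq_one.1 hx
    obtain ⟨q, hsq⟩ := Set.ncard_eq_one.1 hy
    have hp : p ∈ {n : ℕ | 1 ≤ n ∧ ν n = x} := by rw [hsp]; simp
    have hq : q ∈ {n : ℕ | 1 ≤ n ∧ ν n = y} := by rw [hsq]; simp
    refine ⟨p, q, ?_, hp.1, hq.1, hp.2, hq.2, fun n hn h => ?_⟩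
    · rintro rfl
      exact h (hp.2.symm.trans hq.2)
    · rcases h with h | h
      · have : n ∈ {n : ℕ | 1 ≤ n ∧ ν n = x} := ⟨hn, h⟩
        rw [hsp] at this
        exact Or.inl this
      · have : n ∈ {n : ℕ | 1 ≤ n ∧ ν n = y} := ⟨hn, h⟩
        rw [hsq] at this
        exact Or.inr this

/-! ### Multiplicities -/

lemma semi_sub {v : ℝ → ℝ} {lam c : ℝ} {f g : ℝ → ℝ} (hf : IsSemiEF v lam f) (hg : IsSemiEF v lam g) :
    IsSemiEF v lam (f - c • g) := by
  obtain ⟨hf1, hf2, hf3⟩ := hf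
  obtain ⟨hg1, hg2, hg3⟩ := hg
  have df := hf1.differentiable (by norm_num)
  have dg := hg1.differentiable (by norm_num)
  have df2 := hf1.differentiable_deriv_two
  have dg2 := hg1.differentiable_deriv_two
  have e1 : deriv (f - c • g) = deriv f - c • deriv g := by
    ext x
    exact ((df x).hasDerivAt.sub ((dg x).hasDerivAt.const_smul c)).deriv
  have e2 : ∀ x, deriv (deriv f - c • deriv g) x = deriv (deriv f) x - c * deriv (deriv g) x := by
    intro x
    exact ((df2 x).hasDerivAt.sub ((dg2 x).hasDerivAt.const_smul c)).deriv
  refine ⟨hf1.sub (hg1.const_smul c), fun x => ?_, fun x => ?_⟩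
  · rw [e1, e2]
    simp only [Pi.sub_apply, Pi.smul_apply, smul_eq_mul]
    linear_combination hf2 x - c * hg2 x
  · simp only [Pi.sub_apply, Pi.smul_apply, smul_eq_mul, hf3, hg3]; ring

lemma co_sub {α θ c : ℝ} {f g : ℝ → ℝ} (hf : Continuous f) (hg : Continuous g) (k : ℕ) :
    co α θ (f - c • g) k = co α θ f k - c * co α θ g k := by
  unfold co
  have hp := cont_psi α θ (2 * k + 1)
  rw [← intervalIntegral.integral_const_mul, ← intervalIntegral.integral_sub]
  · congr 1; ext x; simp only [Pi.sub_apply, Pi.smul_apply, smul_eq_mul]; ring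
  · exact (hf.mul hp).intervalIntegrable _ _
  · exact ((hg.mul hp).const_mul c).intervalIntegrable _ _

lemma co_zero (α θ : ℝ) (k : ℕ) : co α θ 0 k = 0 := by
  unfold co; simp

lemma semi_zero (v : ℝ → ℝ) (lam : ℝ) : IsSemiEF v lam 0 := by
  refine ⟨contDiff_const, fun x => ?_, fun x => by simp⟩
  have : deriv (0 : ℝ → ℝ) = 0 := by ext x; exact deriv_const x 0
  rw [this, this]; simp

/-- abstract multiplicity computation -/
lemma mult_abs {v : ℝ → ℝ} {lam α : ℝ} {j : ℕ} {P P' : Prop} [Decidable P] [Decidable P']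
    {fp fm : ℝ → ℝ} (hcp : Continuous fp) (hcm : Continuous fm)
    (hinj : ∀ f, IsSemiEF v lam f → co α 0 f j = 0 → co α (π / 2) f j = 0 → f = 0)
    (h0 : ¬ P → ∀ f, IsSemiEF v lam f → co α 0 f j = 0)
    (h1 : ¬ P' → ∀ f, IsSemiEF v lam f → co α (π / 2) f j = 0)
    (hp : P → IsSemiEF v lam fp) (hm : P' → IsSemiEF v lam fm)
    (p0 : co α 0 fp j = π / 2) (p1 : co α (π / 2) fp j = 0)
    (m0 : co α 0 fm j = 0) (m1 : co α (π / 2) fm j = π / 2) :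
    semiMult v lam = (if P then 1 else 0) + (if P' then 1 else 0) := by
  have hpi : π / 2 ≠ 0 := by positivity
  unfold semiMult
  by_cases hP : P <;> by_cases hP' : P'
  · have key : Submodule.span ℝ {f : ℝ → ℝ | IsSemiEF v lam f} =
        Submodule.span ℝ (Set.range ![fp, fm]) := by
      apply le_antisymm
      · rw [Submodule.span_le]
        intro f hf
        have hf' : IsSemiEF v lam f := hf
        have h := hinj _ (semi_sub (c := co α (π / 2) f j / (π / 2))
          (semi_sub (c := co α 0 f j / (π / 2)) hf' (hp hP)) (hm hP')) (by
            have hc1 : Continuous (f - (co α 0 f j / (π / 2)) • fp) := (cont_f hf').sub (hcp.const_smul _)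
            rw [co_sub hc1 hcm, co_sub (cont_f hf') hcp, p0, m0]
            field_simp; ring) (by
            have hc1 : Continuous (f - (co α 0 f j / (π / 2)) • fp) := (cont_f hf').sub (hcp.const_smul _)
            rw [co_sub hc1 hcm, co_sub (cont_f hf') hcp, p1, m1]
            field_simp; ring)
        have e : f = (co α 0 f j / (π / 2)) • fp + (co α (π / 2) f j / (π / 2)) • fm := by
          rw [sub_sub] at h
          exact sub_eq_zero.1 h
        have i1 : fp ∈ Submodule.span ℝ (Set.range ![fp, fm]) := Submodule.subset_span ⟨0, rfl⟩
        have i2 : fm ∈ Submodule.span ℝ (Set.range ![fp, fm]) := Submodule.subset_span ⟨1, rfl⟩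
        rw [e]
        exact Submodule.add_mem _ (Submodule.smul_mem _ _ i1) (Submodule.smul_mem _ _ i2)
      · apply Submodule.span_mono
        rintro _ ⟨i, rfl⟩
        fin_cases i
        · exact hp hP
        · exact hm hP'
    rw [key, finrank_span_eq_card (R := ℝ) (b := ![fp, fm])]
    · simp [hP, hP']
    · rw [LinearIndependent.pair_iff]
      intro s t hst
      have hc1 : Continuous (s • fp) := hcp.const_smul s
      have hz : s • fp - (-t) • fm = 0 := by rw [neg_smul, sub_neg_eq_add]; exact hst
      have hz2 : s • fp = 0 - (-s) • fp := by rw [neg_smul, sub_neg_eq_add, zero_add]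
      have a0 := co_sub (α := α) (θ := 0) (c := -t) hc1 hcm j
      have a1 := co_sub (α := α) (θ := π / 2) (c := -t) hc1 hcm j
      rw [hz, co_zero, hz2, co_sub continuous_zero hcp, co_zero, p0, m0] at a0
      rw [hz, co_zero, hz2, co_sub continuous_zero hcp, co_zero, p1, m1] at a1
      constructor
      · have : s * (π / 2) = 0 := by linarith
        exact (mul_eq_zero.1 this).resolve_right hpi
      · have : t * (π / 2) = 0 := by linarith
        exact (mul_eq_zero.1 this).resolve_right hpi
  · have key : Submodule.span ℝ {f : ℝ → ℝ | IsSemiEF v lam f} = Submodule.span ℝ {fp} := by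
      apply le_antisymm
      · rw [Submodule.span_le]
        intro f hf
        have hf' : IsSemiEF v lam f := hf
        have h := hinj _ (semi_sub (c := co α 0 f j / (π / 2)) hf' (hp hP)) (by
            rw [co_sub (cont_f hf') hcp, p0]
            field_simp; ring) (h1 hP' _ (semi_sub hf' (hp hP)))
        exact Submodule.mem_span_singleton.2 ⟨_, (sub_eq_zero.1 h).symm⟩
      · apply Submodule.span_mono
        rintro _ rfl
        exact hp hP
    rw [key, finrank_span_singleton]
    · simp [hP, hP']
    · rintro rfl
      rw [co_zero] at p0
      exact hpi p0.symm
  · have key : Submodule.span ℝ {f : ℝ → ℝ | IsSemiEF v lam f} = Submodule.span ℝ {fm} := by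
      apply le_antisymm
      · rw [Submodule.span_le]
        intro f hf
        have hf' : IsSemiEF v lam f := hf
        have h := hinj _ (semi_sub (c := co α (π / 2) f j / (π / 2)) hf' (hm hP'))
          (h0 hP _ (semi_sub hf' (hm hP'))) (by
            rw [co_sub (cont_f hf') hcm, m1]
            field_simp; ring)
        exact Submodule.mem_span_singleton.2 ⟨_, (sub_eq_zero.1 h).symm⟩
      · apply Submodule.span_mono
        rintro _ rfl
        exact hm hP'
    rw [key, finrank_span_singleton]
    · simp [hP, hP']
    · rintro rfl
      rw [co_zero] at m1
      exact hpi m1.symm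
  · have key : Submodule.span ℝ {f : ℝ → ℝ | IsSemiEF v lam f} = ⊥ := by
      rw [eq_bot_iff, Submodule.span_le]
      intro f hf
      exact hinj f hf (h0 hP f hf) (h1 hP' f hf)
    rw [key, finrank_bot]
    simp [hP, hP']

structure Cluster (B a Q : ℝ) (j : ℕ) (μ μ' : ℝ) : Prop where
  near : |μ - dd j| ≤ 1
  near' : |μ' - dd j| ≤ 1
  ls : ∃ A A', IsLS B a Q 1 j μ A ∧ IsLS B a Q (-1) j μ' A' ∧ Eqn B a Q 1 μ A j ∧
    Eqn B a Q (-1) μ' A' j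
  mult : ∀ x, |x - dd j| ≤ 1 → semiMult (vB B a Q) (x - 2 * (a * Q) ^ 2) =
    (if x = μ then 1 else 0) + (if x = μ' then 1 else 0)
  only : ∀ x f, |x - dd j| ≤ 1 → f ≠ 0 → IsSemiEF (vB B a Q) (x - 2 * (a * Q) ^ 2) f →
    x = μ ∨ x = μ'

lemma cluster_exists {B a Q : ℝ} {j : ℕ} (hQ : 0 ≤ Q) (hS : 8 * (KK B a * Q * (j + 1)) ≤ 1) :
    ∃ μ μ', Cluster B a Q j μ μ' := by
  obtain ⟨μ, A, hμ, hA, hE⟩ := eig_exists (σ := 1) hQ (by simp) hS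
  obtain ⟨μ', A', hμ', hA', hE'⟩ := eig_exists (σ := -1) hQ (by simp) hS
  obtain ⟨D, hD⟩ := decay hQ (by simp) hμ hA.bdd hE 4
  obtain ⟨D', hD'⟩ := decay hQ (by simp) hμ' hA'.bdd hE' 4
  have sp := efun_semi sec_cos hE hD
  have sm := efun_semi sec_sin hE' hD'
  have n0 : ∀ x f, |x - dd j| ≤ 1 → IsSemiEF (vB B a Q) (x - 2 * (a * Q) ^ 2) f →
      (co (a * Q) 0 f j = 0 → ∀ k, co (a * Q) 0 f k = 0) ∧ (x ≠ μ → co (a * Q) 0 f j = 0) :=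
    fun x f hx hf => sol_near hQ (by simp) hS hμ hx hA (hE j) (co_bdd (cont_f hf)) (co_eqn sec_cos hf)
  have n1 : ∀ x f, |x - dd j| ≤ 1 → IsSemiEF (vB B a Q) (x - 2 * (a * Q) ^ 2) f →
      (co (a * Q) (π / 2) f j = 0 → ∀ k, co (a * Q) (π / 2) f k = 0) ∧
      (x ≠ μ' → co (a * Q) (π / 2) f j = 0) :=
    fun x f hx hf => sol_near hQ (by simp) hS hμ' hx hA' (hE' j) (co_bdd (cont_f hf)) (co_eqn sec_sin hf)
  have inj : ∀ x f, |x - dd j| ≤ 1 → IsSemiEF (vB B a Q) (x - 2 * (a * Q) ^ 2) f →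
      co (a * Q) 0 f j = 0 → co (a * Q) (π / 2) f j = 0 → f = 0 :=
    fun x f hx hf h0 h1 => complete (cont_f hf) hf.2.2 ((n0 x f hx hf).1 h0) ((n1 x f hx hf).1 h1)
  refine ⟨μ, μ', hμ, hμ', ⟨A, A', hA, hA', hE j, hE' j⟩, fun x hx => ?_, fun x f hx hf0 hf => ?_⟩
  · refine mult_abs (α := a * Q) (j := j) (cont_f sp) (cont_f sm) (fun f hf => inj x f hx hf)
      (fun h f hf => (n0 x f hx hf).2 h) (fun h f hf => (n1 x f hx hf).2 h)
      (fun h => h ▸ sp) (fun h => h ▸ sm) ?_ ?_ ?_ ?_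
    · rw [efun_co hD, hA.one]; simp
    · rw [efun_co hD, hA.one]; simp
    · rw [efun_co hD', hA'.one]; simp
    · rw [efun_co hD', hA'.one]; simp
  · by_contra h
    push Not at h
    exact hf0 (inj x f hx hf ((n0 x f hx hf).2 h.1) ((n1 x f hx hf).2 h.2))

lemma gap_eq {B a Q : ℝ} {m : ℕ} (hQ : 0 ≤ Q) (hS : 8 * (KK B a * Q * (m + 2)) ≤ 1)
    {lamM : ℕ → ℝ} (hM : EnumSemi (vB B a Q) lamM) (j : ℕ) (hj : j < m) :
    ∃ μ μ', Cluster B a Q j μ μ' ∧ lamM (2 * j + 2) - lamM (2 * j + 1) = |μ - μ'| := by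
  obtain ⟨hmono, hef, hcard⟩ := hM
  have hKQ : 0 ≤ KK B a * Q := mul_nonneg (KK_nonneg B a) hQ
  have hex : ∀ k : ℕ, ∃ μ μ', k ≤ m + 1 → Cluster B a Q k μ μ' := by
    intro k
    by_cases hk : k ≤ m + 1
    · have hk' : (k : ℝ) ≤ m + 1 := by exact_mod_cast hk
      obtain ⟨μ, μ', h⟩ := cluster_exists (B := B) (a := a) (j := k) hQ
        (by nlinarith [mul_nonneg hKQ (sub_nonneg.2 hk')])
      exact ⟨μ, μ', fun _ => h⟩
    · exact ⟨0, 0, fun h => absurd h hk⟩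
  choose μ μ' hcl using hex
  set s := 2 * (a * Q) ^ 2 with hs
  refine ⟨μ j, μ' j, hcl j (by omega), ?_⟩
  have h := count_gap (ν := fun n => lamM n + s) (m := m) (μ := μ) (μ' := μ')
    (fun i k hi hik => by
      have := hmono (show i ∈ {n : ℕ | 1 ≤ n} from hi) (show k ∈ {n : ℕ | 1 ≤ n} from hi.trans hik) hik
      linarith)
    (fun k hk => (hcl k (by omega)).near) (fun k hk => (hcl k (by omega)).near')
    (fun n hn hle => by
      obtain ⟨f, hf0, hf⟩ := hef n hn
      have hf' : IsSemiEF (vB B a Q) ((lamM n + s) - 2 * (a * Q) ^ 2) f := by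
        rw [← hs, add_sub_cancel_right]; exact hf
      by_cases hfar : ∀ k ≤ m + 1, 1 < |lamM n + s - dd k|
      · exfalso
        refine hf0 (complete (α := a * Q) (cont_f hf) hf.2.2 ?_ ?_)
        · exact sol_away hQ (by simp) hS hle hfar (co_bdd (cont_f hf)) (co_eqn sec_cos hf')
        · exact sol_away hQ (by simp) hS hle hfar (co_bdd (cont_f hf)) (co_eqn sec_sin hf')
      · push Not at hfar
        obtain ⟨k, hk, hk2⟩ := hfar
        have hkm : k ≤ m := by
          by_contra hc
          have e : k = m + 1 := by omega
          subst e
          have := dd_succ m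
          have := abs_le.1 hk2
          linarith
        exact ⟨k, hkm, (hcl k hk).only _ f hk2 hf0 hf'⟩)
    (fun k hk => by
      have c := hcl k (by omega)
      have e : ∀ x : ℝ, Nat.card {n : ℕ // 1 ≤ n ∧ lamM n + s = x} = semiMult (vB B a Q) (x - s) := by
        intro x
        rw [← hcard (x - s)]
        congr 1
        simp only [eq_sub_iff_add_eq]
      apply pair_of_card
      · rw [e, c.mult _ c.near, if_pos rfl]
      · rw [e, c.mult _ c.near', if_pos rfl])
    j hj
  rw [← h]; ring

lemma main_coef {b c B a : ℝ} (hB : B = -b / 2) (ha : a ^ 2 = -c / 2) (j : ℕ) :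
    |Tc B a (j + 1)| = 32 * |(b / 2) * ∏ k ∈ Finset.Icc 1 (j + 1), ((b / 2) ^ 2 + 8 * c * (k : ℝ) ^ 2)| /
      (2 ^ (4 * (j + 2)) * (((2 * j + 2).factorial : ℝ)) ^ 2) := by
  unfold Tc
  rw [Pi0_sq]
  have e : ∏ k ∈ Finset.Icc 1 (j + 1), ((b / 2) ^ 2 + 8 * c * (k : ℝ) ^ 2) =
      ∏ i ∈ Finset.range (j + 1), (B ^ 2 - 16 * a ^ 2 * ((i : ℝ) + 1) ^ 2) := by
    have h := Finset.prod_Ico_add' (fun i : ℕ => (B ^ 2 - 16 * a ^ 2 * (i : ℝ) ^ 2)) 0 (j + 1) 1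
    rw [Finset.range_eq_Ico]
    refine Eq.trans ?_ (h.symm.trans ?_)
    · apply Finset.prod_congr
      · ext k; simp only [Finset.mem_Icc, Finset.mem_Ico]; omega
      · intro k _; rw [ha, hB]; ring
    · apply Finset.prod_congr rfl
      intro k _; push_cast
      try ring
  rw [e]
  set P := ∏ i ∈ Finset.range (j + 1), (B ^ 2 - 16 * a ^ 2 * ((i : ℝ) + 1) ^ 2)
  have hb : 2 * B * P = -(2 * (b / 2 * P)) := by rw [hB]; ring
  rw [abs_div, hb, abs_neg, abs_mul 2, abs_of_pos (by norm_num : (0 : ℝ) < 2),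
    abs_of_pos (by positivity : (0 : ℝ) < 16 ^ (j + 1) * (((2 * (j + 1)).factorial : ℝ)) ^ 2),
    show 2 * (j + 1) = 2 * j + 2 by ring, show 4 * (j + 2) = 4 * (j + 1) + 4 by ring, pow_add 2,
    pow_mul 2, show (2 : ℝ) ^ 4 = 16 by norm_num]
  rw [div_eq_div_iff (by positivity) (by positivity)]
  ring

theorem stmt7 (b c m1 : ℝ) (hc : c < 0) (hm1 : 0 < m1)
    (m : ℕ) (hm : 2 ≤ m) (lamP lamM : ℝ → ℕ → ℝ)
    (hP : ∀ q : ℝ, 0 < q →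
      EnumPer (fun x => b * q ^ m1 * Real.cos (2 * x) + c * q ^ (2 * m1) * Real.cos (4 * x))
        (lamP q))
    (hM : ∀ q : ℝ, 0 < q →
      EnumSemi (fun x => b * q ^ m1 * Real.cos (2 * x) + c * q ^ (2 * m1) * Real.cos (4 * x))
        (lamM q)) :
    ∃ C > 0, ∃ δ > 0, ∀ q : ℝ, 0 < q → q < δ →
      |gapLen (lamP q) (lamM q) (2 * m - 1) -
          32 * |(b / 2) * ∏ k ∈ Finset.Icc 1 (m - 1), ((b / 2) ^ 2 + 8 * c * (k : ℝ) ^ 2)| *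
            q ^ (m1 * (2 * (m : ℝ) - 1)) / (2 ^ (4 * m) * (((2 * m - 2).factorial : ℝ)) ^ 2)| ≤
        C * q ^ (m1 * (2 * (m : ℝ) + 1)) := by
  obtain ⟨j, rfl⟩ : ∃ j, m = j + 2 := ⟨m - 2, by omega⟩
  obtain ⟨B, hB⟩ : ∃ B, B = -b / 2 := ⟨_, rfl⟩
  obtain ⟨a, ha⟩ : ∃ a : ℝ, a ^ 2 = -c / 2 := ⟨Real.sqrt (-c / 2), Real.sq_sqrt (by linarith)⟩
  obtain ⟨C, hC, Q0, hQ0, has⟩ := asym B a j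
  have hKn := KK_nonneg B a
  obtain ⟨Q1, hQ1, hQ1s⟩ : ∃ Q1 > 0, ∀ Q, 0 < Q → Q < Q1 → 8 * (KK B a * Q * (((j + 2 : ℕ) : ℝ) + 2)) ≤ 1 := by
    set N : ℝ := ((j + 2 : ℕ) : ℝ) + 2 with hN
    have hN0 : 0 < N := by positivity
    refine ⟨1 / (8 * (KK B a + 1) * N), by positivity, fun Q h0 h1 => ?_⟩
    rw [lt_div_iff₀ (by positivity)] at h1
    have : 0 ≤ Q * N := by positivity
    nlinarith
  have hmin : 0 < min Q0 Q1 := lt_min hQ0 hQ1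
  refine ⟨C, hC, (min Q0 Q1) ^ (1 / m1), Real.rpow_pos_of_pos hmin _, fun q hq hqδ => ?_⟩
  set Q := q ^ m1 with hQ
  have hQpos : 0 < Q := Real.rpow_pos_of_pos hq _
  have hQlt : Q < min Q0 Q1 := by
    have := Real.rpow_lt_rpow hq.le hqδ hm1
    rwa [← Real.rpow_mul hmin.le, one_div_mul_cancel hm1.ne', Real.rpow_one] at this
  have hv : (fun x => b * Q * Real.cos (2 * x) + c * q ^ (2 * m1) * Real.cos (4 * x)) = vB B a Q := by
    ext x
    unfold vB
    have : q ^ (2 * m1) = Q ^ 2 := by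
      rw [hQ, ← Real.rpow_natCast (q ^ m1), ← Real.rpow_mul hq.le]; congr 1; push_cast; ring
    rw [this, mul_pow, ha, hB]; ring
  have hEn := hM q hq
  rw [hv] at hEn
  obtain ⟨μ, μ', hcl, hgap⟩ := gap_eq hQpos.le (hQ1s Q hQpos (hQlt.trans_le (min_le_right _ _))) hEn (j + 1) (by omega)
  obtain ⟨A, A', hA, hA', hE, hE'⟩ := hcl.ls
  have h := has Q hQpos (hQlt.trans_le (min_le_left _ _)) μ μ' A A' hcl.near hcl.near' hA hA' hE hE'
  have g1 : gapLen (lamP q) (lamM q) (2 * (j + 2) - 1) = |μ - μ'| := by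
    unfold gapLen
    rw [if_pos ⟨j + 1, by omega⟩, ← hgap]
    congr 2
  have p1 : q ^ (m1 * (2 * ((j + 2 : ℕ) : ℝ) - 1)) = Q ^ (2 * j + 3) := by
    rw [hQ, ← Real.rpow_natCast (q ^ m1), ← Real.rpow_mul hq.le]; congr 1; push_cast; ring
  have p2 : q ^ (m1 * (2 * ((j + 2 : ℕ) : ℝ) + 1)) = Q ^ (2 * j + 5) := by
    rw [hQ, ← Real.rpow_natCast (q ^ m1), ← Real.rpow_mul hq.le]; congr 1; push_cast; ring
  rw [g1, p1, p2, show j + 2 - 1 = j + 1 by omega, show 2 * (j + 2) - 2 = 2 * j + 2 by omega]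
  rw [main_coef hB ha] at h
  refine le_trans (le_of_eq ?_) h
  congr 2
  ring
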